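/- arXiv:1502.06216 — 12 statements merged into one kernel-verified Lean document; each statement's English description precedes it below -/
import Mathlib

section
/- Let N ≥ 1, let c ∈ ℝ^{N×N} be a cost matrix and γ > 0. For every q in the simplex Σ_N, the function p ↦ W_γ(p,q) is strictly convex on Σ_N. Consequently, for every proper, lower semicontinuous, convex function f : ℝ^N → ℝ ∪ {+∞} whose domain intersects Σ_N and every τ > 0, the problem min_{p ∈ Σ_N} W_γ(p,q) + τ f(p) admits a unique minimizer (the entropic JKO step Prox_{τf}^{W_γ}(q)). -/
open scoped BigOperators

noncomputable section

/-- A proper, lower semicontinuous, convex function with values in `ℝ ∪ {+∞}`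
(encoded as `EReal`, never taking the value `⊥`). -/
def ProperLSCConvex {E : Type*} [AddCommGroup E] [Module ℝ E] [TopologicalSpace E]
    (f : E → EReal) : Prop :=
  (∀ x, f x ≠ ⊥) ∧ (∃ x, f x ≠ ⊤) ∧ LowerSemicontinuous f ∧
    ∀ x y : E, ∀ a b : ℝ, 0 ≤ a → 0 ≤ b → a + b = 1 →
      f (a • x + b • y) ≤ (a : EReal) * f x + (b : EReal) * f y

/-- The probability simplex `Σ_N`. -/
def simplex (N : ℕ) : Set (Fin N → ℝ) :=
  {p | (∀ i, 0 ≤ p i) ∧ ∑ i, p i = 1}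

/-- The set of couplings `Π(p,q)`. -/
def couplings {N : ℕ} (p q : Fin N → ℝ) : Set (Fin N → Fin N → ℝ) :=
  {π | (∀ i j, 0 ≤ π i j) ∧ (∀ i, ∑ j, π i j = p i) ∧ (∀ j, ∑ i, π i j = q j)}

/-- Entropy `E(π) = Σ_{ij} π_{ij}(log π_{ij} - 1)` (with `0 log 0 = 0`). -/
def entropy {N : ℕ} (π : Fin N → Fin N → ℝ) : ℝ :=
  ∑ i, ∑ j, π i j * (Real.log (π i j) - 1)

/-- Frobenius inner product `⟨c, π⟩`. -/
def frob {N : ℕ} (c π : Fin N → Fin N → ℝ) : ℝ :=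
  ∑ i, ∑ j, c i j * π i j

/-- Entropic-regularized transport cost `W_γ(p,q)`. -/
def Wreg {N : ℕ} (c : Fin N → Fin N → ℝ) (γ : ℝ) (p q : Fin N → ℝ) : ℝ :=
  sInf ((fun π => frob c π + γ * entropy π) '' couplings p q)

def objA {N : ℕ} (c : Fin N → Fin N → ℝ) (γ : ℝ) (π : Fin N → Fin N → ℝ) : ℝ :=
  frob c π + γ * entropy π

def colSet {N : ℕ} (q : Fin N → ℝ) : Set (Fin N → Fin N → ℝ) :=
  {π | (∀ i j, 0 ≤ π i j) ∧ (∀ j, ∑ i, π i j = q j)}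

lemma objA_continuous {N : ℕ} (c : Fin N → Fin N → ℝ) (γ : ℝ) : Continuous (objA c γ) := by
  have h : Continuous (fun x : ℝ => x * (Real.log x - 1)) := by
    have : (fun x : ℝ => x * (Real.log x - 1)) = fun x => x * Real.log x - x := by
      ext x; ring
    rw [this]
    exact Real.continuous_mul_log.sub continuous_id
  unfold objA frob entropy
  refine Continuous.add (by fun_prop) (continuous_const.mul ?_)
  refine continuous_finset_sum _ fun i _ => continuous_finset_sum _ fun j _ => ?_
  exact h.comp (by fun_prop : Continuous fun π : Fin N → Fin N → ℝ => π i j)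

lemma colSet_compact {N : ℕ} (q : Fin N → ℝ) : IsCompact (colSet q) := by
  refine IsCompact.of_isClosed_subset
    (isCompact_Icc (a := (0 : Fin N → Fin N → ℝ)) (b := fun _ j => q j)) ?_ ?_
  · have : colSet q = (⋂ i, ⋂ j, {π : Fin N → Fin N → ℝ | 0 ≤ π i j}) ∩
        ⋂ j, {π : Fin N → Fin N → ℝ | ∑ i, π i j = q j} := by
      ext π; simp [colSet]
    rw [this]
    refine IsClosed.inter ?_ ?_
    · exact isClosed_iInter fun i => isClosed_iInter fun j =>
        isClosed_le continuous_const (by fun_prop)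
    · exact isClosed_iInter fun j => isClosed_eq (by fun_prop) continuous_const
  · intro π hπ
    refine ⟨fun i j => hπ.1 i j, fun i j => ?_⟩
    show π i j ≤ q j
    rw [← hπ.2 j]
    exact Finset.single_le_sum (f := fun i => π i j) (fun i _ => hπ.1 i j) (Finset.mem_univ i)

lemma couplings_compact {N : ℕ} (p q : Fin N → ℝ) : IsCompact (couplings p q) := by
  have : couplings p q = colSet q ∩ ⋂ i, {π : Fin N → Fin N → ℝ | ∑ j, π i j = p i} := by
    ext π; simp [colSet, couplings]; tauto
  rw [this]
  exact (colSet_compact q).inter_right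
    (isClosed_iInter fun j => isClosed_eq (by fun_prop) continuous_const)

lemma couplings_nonempty {N : ℕ} {p q : Fin N → ℝ} (hp : p ∈ simplex N) (hq : q ∈ simplex N) :
    (couplings p q).Nonempty := by
  refine ⟨fun i j => p i * q j, fun i j => mul_nonneg (hp.1 i) (hq.1 j), fun i => ?_, fun j => ?_⟩
  · rw [← Finset.mul_sum, hq.2, mul_one]
  · rw [← Finset.sum_mul, hp.2, one_mul]

lemma Wreg_le {N : ℕ} (c : Fin N → Fin N → ℝ) (γ : ℝ) {p q : Fin N → ℝ}
    {π : Fin N → Fin N → ℝ} (h : π ∈ couplings p q) : Wreg c γ p q ≤ objA c γ π :=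
  csInf_le ((couplings_compact p q).image (objA_continuous c γ)).bddBelow ⟨π, h, rfl⟩

lemma Wreg_attained {N : ℕ} (c : Fin N → Fin N → ℝ) (γ : ℝ) {p q : Fin N → ℝ}
    (hp : p ∈ simplex N) (hq : q ∈ simplex N) : ∃ π ∈ couplings p q, objA c γ π = Wreg c γ p q :=
  ((couplings_compact p q).image (objA_continuous c γ)).sInf_mem
    ((couplings_nonempty hp hq).image _)

lemma h_strict : StrictConvexOn ℝ (Set.Ici (0 : ℝ)) (fun x : ℝ => x * (Real.log x - 1)) := by
  refine ⟨convex_Ici 0, fun x hx y hy hxy a b ha hb hab => ?_⟩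
  have := Real.strictConvexOn_mul_log.2 hx hy hxy ha hb hab
  simp only [smul_eq_mul] at this ⊢
  linarith

lemma entropy_lt {N : ℕ} {π ρ : Fin N → Fin N → ℝ} (hπ : ∀ i j, 0 ≤ π i j)
    (hρ : ∀ i j, 0 ≤ ρ i j) (hne : π ≠ ρ) {a b : ℝ} (ha : 0 < a) (hb : 0 < b) (hab : a + b = 1) :
    entropy (a • π + b • ρ) < a * entropy π + b * entropy ρ := by
  have hle : ∀ i j, (a • π + b • ρ) i j * (Real.log ((a • π + b • ρ) i j) - 1) ≤
      a * (π i j * (Real.log (π i j) - 1)) + b * (ρ i j * (Real.log (ρ i j) - 1)) := fun i j =>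
    h_strict.convexOn.2 (hπ i j) (hρ i j) ha.le hb.le hab
  obtain ⟨i, hi⟩ := Function.ne_iff.1 hne
  obtain ⟨j, hj⟩ := Function.ne_iff.1 hi
  unfold entropy
  simp only [Finset.mul_sum, ← Finset.sum_add_distrib]
  refine Finset.sum_lt_sum (fun i _ => Finset.sum_le_sum fun j _ => hle i j)
    ⟨i, Finset.mem_univ i, ?_⟩
  exact Finset.sum_lt_sum (fun j _ => hle i j)
    ⟨j, Finset.mem_univ j, h_strict.2 (hπ i j) (hρ i j) hj ha hb hab⟩

lemma frob_comb {N : ℕ} (c π ρ : Fin N → Fin N → ℝ) (a b : ℝ) :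
    frob c (a • π + b • ρ) = a * frob c π + b * frob c ρ := by
  unfold frob
  simp only [Finset.mul_sum, ← Finset.sum_add_distrib]
  refine Finset.sum_congr rfl fun i _ => Finset.sum_congr rfl fun j _ => ?_
  simp only [Pi.add_apply, Pi.smul_apply, smul_eq_mul]
  ring

lemma simplex_convex (N : ℕ) : Convex ℝ (simplex N) := by
  intro p hp q hq a b ha hb hab
  refine ⟨fun i => ?_, ?_⟩
  · exact add_nonneg (mul_nonneg ha (hp.1 i)) (mul_nonneg hb (hq.1 i))
  · simp only [Pi.add_apply, Pi.smul_apply, smul_eq_mul, Finset.sum_add_distrib,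
      ← Finset.mul_sum, hp.2, hq.2]
    linarith

lemma Wreg_strict {N : ℕ} (c : Fin N → Fin N → ℝ) (γ : ℝ) (hγ : 0 < γ)
    (q : Fin N → ℝ) (hq : q ∈ simplex N) :
    StrictConvexOn ℝ (simplex N) (fun p => Wreg c γ p q) := by
  refine ⟨simplex_convex N, fun x hx y hy hxy a b ha hb hab => ?_⟩
  obtain ⟨π, hπ, eπ⟩ := Wreg_attained c γ hx hq
  obtain ⟨ρ, hρ, eρ⟩ := Wreg_attained c γ hy hq
  have hne : π ≠ ρ := by
    rintro rfl
    exact hxy (funext fun i => by rw [← hπ.2.1 i, hρ.2.1 i])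
  have hmem : a • π + b • ρ ∈ couplings (a • x + b • y) q := by
    refine ⟨fun i j => add_nonneg (mul_nonneg ha.le (hπ.1 i j)) (mul_nonneg hb.le (hρ.1 i j)),
      fun i => ?_, fun j => ?_⟩
    · simp only [Pi.add_apply, Pi.smul_apply, smul_eq_mul, Finset.sum_add_distrib,
        ← Finset.mul_sum, hπ.2.1, hρ.2.1]
    · simp only [Pi.add_apply, Pi.smul_apply, smul_eq_mul, Finset.sum_add_distrib,
        ← Finset.mul_sum, hπ.2.2, hρ.2.2]
      rw [← add_mul, hab, one_mul]
  have h1 := Wreg_le c γ hmem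
  have h2 := mul_lt_mul_of_pos_left (entropy_lt hπ.1 hρ.1 hne ha hb hab) hγ
  simp only [smul_eq_mul]
  rw [← eπ, ← eρ]
  refine h1.trans_lt ?_
  unfold objA
  rw [frob_comb]
  linarith

lemma mul_coe_mono {τ : ℝ} (hτ : 0 < τ) : Monotone (fun x : EReal => (τ : EReal) * x) :=
  fun _ _ h => mul_le_mul_of_nonneg_left h (EReal.coe_nonneg.2 hτ.le)

lemma mul_coe_cont {τ : ℝ} (hτ : 0 < τ) : Continuous (fun x : EReal => (τ : EReal) * x) := by
  have h0 : (τ : EReal) ≠ 0 := EReal.coe_ne_zero.2 hτ.ne'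
  refine continuous_iff_continuousAt.2 fun x => ?_
  have := EReal.continuousAt_mul (p := ((τ : EReal), x)) (Or.inl h0) (Or.inl h0)
    (Or.inl (EReal.coe_ne_bot τ)) (Or.inl (EReal.coe_ne_top τ))
  exact ContinuousAt.comp (f := fun x : EReal => ((τ : EReal), x)) this (by fun_prop)

lemma jko_exists {N : ℕ} (c : Fin N → Fin N → ℝ) (γ : ℝ)
    (q : Fin N → ℝ) (hq : q ∈ simplex N) (f : (Fin N → ℝ) → EReal)
    (hf : LowerSemicontinuous f) (τ : ℝ) (hτ : 0 < τ) :
    ∃ p ∈ simplex N, ∀ p' ∈ simplex N,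
      ((Wreg c γ p q : ℝ) : EReal) + (τ : EReal) * f p ≤
        ((Wreg c γ p' q : ℝ) : EReal) + (τ : EReal) * f p' := by
  let R : (Fin N → Fin N → ℝ) → (Fin N → ℝ) := fun π i => ∑ j, π i j
  have hR : Continuous R := by fun_prop
  have hl : LowerSemicontinuous
      (fun π => ((objA c γ π : ℝ) : EReal) + (τ : EReal) * f (R π)) := by
    refine LowerSemicontinuous.add' ?_ ?_ fun π => ?_
    · exact (continuous_coe_real_ereal.comp (objA_continuous c γ)).lowerSemicontinuous
    · exact (mul_coe_cont hτ).comp_lowerSemicontinuous (hf.comp hR) (mul_coe_mono hτ)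
    · exact EReal.continuousAt_add (Or.inl (EReal.coe_ne_top _)) (Or.inl (EReal.coe_ne_bot _))
  have hne : (colSet q).Nonempty := by
    obtain ⟨π, h⟩ := couplings_nonempty hq hq
    exact ⟨π, h.1, h.2.2⟩
  obtain ⟨π, hπ, hmin⟩ := LowerSemicontinuousOn.exists_isMinOn hne (colSet_compact q)
    (hl.lowerSemicontinuousOn _)
  refine ⟨R π, ⟨fun i => Finset.sum_nonneg fun j _ => hπ.1 i j, ?_⟩, fun p' hp' => ?_⟩
  · show ∑ i, ∑ j, π i j = 1
    rw [Finset.sum_comm]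
    simp only [hπ.2, hq.2]
  · obtain ⟨ρ, hρ, eρ⟩ := Wreg_attained c γ hp' hq
    have h1 : ((objA c γ π : ℝ) : EReal) + (τ : EReal) * f (R π) ≤
        ((objA c γ ρ : ℝ) : EReal) + (τ : EReal) * f (R ρ) := hmin (show ρ ∈ colSet q from ⟨hρ.1, hρ.2.2⟩)
    have h2 : R ρ = p' := funext hρ.2.1
    rw [h2, eρ] at h1
    refine le_trans (add_le_add_left (EReal.coe_le_coe_iff.2 ?_) _) h1
    exact Wreg_le c γ ⟨hπ.1, fun _ => rfl, hπ.2⟩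

/-- For `q ∈ Σ_N`, `p ↦ W_γ(p,q)` is strictly convex on `Σ_N`; consequently for every
proper lsc convex `f` with domain intersecting `Σ_N` and every `τ > 0`, the entropic
JKO step `min_{p ∈ Σ_N} W_γ(p,q) + τ f(p)` has a unique minimizer. -/
theorem entropic_JKO_step_unique {N : ℕ} (hN : 1 ≤ N)
    (c : Fin N → Fin N → ℝ) (γ : ℝ) (hγ : 0 < γ)
    (q : Fin N → ℝ) (hq : q ∈ simplex N) :
    StrictConvexOn ℝ (simplex N) (fun p => Wreg c γ p q) ∧
      ∀ f : (Fin N → ℝ) → EReal, ProperLSCConvex f →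
        (∃ p ∈ simplex N, f p ≠ ⊤) →
        ∀ τ : ℝ, 0 < τ →
          ∃! p : Fin N → ℝ, p ∈ simplex N ∧
            ∀ p' ∈ simplex N,
              ((Wreg c γ p q : ℝ) : EReal) + (τ : EReal) * f p ≤
                ((Wreg c γ p' q : ℝ) : EReal) + (τ : EReal) * f p' := by
  refine ⟨Wreg_strict c γ hγ q hq, fun f hf hdom τ hτ => ?_⟩
  obtain ⟨hbot, -, hlsc, hconv⟩ := hf
  obtain ⟨p₀, hp₀, hfp₀⟩ := hdom
  have hfin : ∀ p : Fin N → ℝ, (∀ p' ∈ simplex N,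
      ((Wreg c γ p q : ℝ) : EReal) + (τ : EReal) * f p ≤
        ((Wreg c γ p' q : ℝ) : EReal) + (τ : EReal) * f p') → ∃ r : ℝ, f p = (r : EReal) := by
    intro p h
    have h0 := h p₀ hp₀
    obtain ⟨r₀, hr₀⟩ : ∃ r : ℝ, f p₀ = (r : EReal) :=
      ⟨(f p₀).toReal, (EReal.coe_toReal hfp₀ (hbot p₀)).symm⟩
    refine ⟨(f p).toReal, (EReal.coe_toReal ?_ (hbot p)).symm⟩
    intro ht
    rw [ht, hr₀, EReal.coe_mul_top_of_pos hτ, EReal.coe_add_top, ← EReal.coe_mul,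
      ← EReal.coe_add] at h0
    exact EReal.coe_ne_top _ (top_le_iff.1 h0)
  obtain ⟨p, hp, hmin⟩ := jko_exists c γ q hq f hlsc τ hτ
  refine ⟨p, ⟨hp, hmin⟩, ?_⟩
  rintro p' ⟨hp', hmin'⟩
  by_contra hne
  obtain ⟨r, hr⟩ := hfin p hmin
  obtain ⟨r', hr'⟩ := hfin p' hmin'
  have hh : (0 : ℝ) < 1 / 2 := by norm_num
  have hs : (1 / 2 : ℝ) + 1 / 2 = 1 := by norm_num
  have hW := (Wreg_strict c γ hγ q hq).2 hp' hp hne hh hh hs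
  have hm := simplex_convex N hp' hp hh.le hh.le hs
  have hc := hconv p' p (1 / 2) (1 / 2) hh.le hh.le hs
  set m := (1 / 2 : ℝ) • p' + (1 / 2 : ℝ) • p with hmdef
  rw [hr, hr', ← EReal.coe_mul, ← EReal.coe_mul, ← EReal.coe_add] at hc
  have hc2 : ((Wreg c γ m q : ℝ) : EReal) + (τ : EReal) * f m ≤
      ((Wreg c γ m q + τ * (1 / 2 * r' + 1 / 2 * r) : ℝ) : EReal) := by
    rw [EReal.coe_add, EReal.coe_mul]
    exact add_le_add_right (mul_coe_mono hτ hc) _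
  have k1 := (hmin m hm).trans hc2
  have k2 := (hmin' m hm).trans hc2
  rw [hr, ← EReal.coe_mul, ← EReal.coe_add, EReal.coe_le_coe_iff] at k1
  rw [hr', ← EReal.coe_mul, ← EReal.coe_add, EReal.coe_le_coe_iff] at k2
  simp only [smul_eq_mul] at hW
  linarith
end
end

section
/- (Convergence of Dykstra's algorithm for the KL divergence.) Let N ≥ 1, let ξ ∈ ℝ^{N×N} have strictly positive entries, and let φ_1, φ_2 : ℝ^{N×N} → ℝ ∪ {+∞} be proper, lower semicontinuous, convex functions such that ri(dom φ_1) ∩ ri(dom φ_2) ∩ {π : all entries of π are strictly positive} ≠ ∅. Define π^{(0)} = ξ, z^{(0)} = z^{(−1)} = the all-ones matrix, and for ℓ ≥ 1: π^{(ℓ)} = Prox^{KL}_{φ_{[ℓ]_2}}(π^{(ℓ−1)} ⊙ z^{(ℓ−2)}) and z^{(ℓ)} = z^{(ℓ−2)} ⊙ π^{(ℓ−1)} ⊘ π^{(ℓ)}, where [ℓ]_2 = 1 if ℓ is odd and 2 if ℓ is even. Then every iterate π^{(ℓ)} has strictly positive entries, and π^{(ℓ)} converges, as ℓ → ∞, to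 the unique minimizer of π ↦ KL(π|ξ) + φ_1(π) + φ_2(π) over ℝ_+^{N×N}. -/
open scoped BigOperators
open Filter Topology

noncomputable section

def KLmat {N : ℕ} (π ξ : Fin N → Fin N → ℝ) : ℝ :=
  ∑ i, ∑ j, (π i j * Real.log (π i j / ξ i j) - π i j + ξ i j)

/-- `πp` is the KL proximal point `Prox^{KL}_φ(μ)`: it is nonnegative and minimizes
`π̃ ↦ KL(π̃|μ) + φ(π̃)` over nonnegative matrices. -/
def IsKLProx {N : ℕ} (φ : (Fin N → Fin N → ℝ) → EReal)
    (μ πp : Fin N → Fin N → ℝ) : Prop :=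
  (∀ i j, 0 ≤ πp i j) ∧
    ∀ σ : Fin N → Fin N → ℝ, (∀ i j, 0 ≤ σ i j) →
      ((KLmat πp μ : ℝ) : EReal) + φ πp ≤ ((KLmat σ μ : ℝ) : EReal) + φ σ

def klr (b a : ℝ) : ℝ := b * Real.log (b / a) - b + a

lemma klr_hell {a b : ℝ} (ha : 0 < a) (hb : 0 ≤ b) : (√b - √a) ^ 2 ≤ klr b a := by
  unfold klr
  rcases hb.eq_or_lt with rfl | hb
  · simp [Real.sq_sqrt ha.le]
  have h1 : Real.log (b / a) = - (2 * Real.log (√a / √b)) := by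
    rw [Real.log_div hb.ne' ha.ne', Real.log_div (by positivity) (by positivity),
      Real.log_sqrt ha.le, Real.log_sqrt hb.le]; ring
  have h2 := Real.log_le_sub_one_of_pos (show 0 < √a / √b by positivity)
  have h3 : b * (√a / √b) = √a * √b := by
    have : √b ≠ 0 := by positivity
    field_simp
    nlinarith [Real.sq_sqrt hb.le]
  rw [h1]
  have h4 := mul_le_mul_of_nonneg_left h2 hb.le
  nlinarith [Real.sq_sqrt hb.le, Real.sq_sqrt ha.le]

lemma klr_nonneg {a b : ℝ} (ha : 0 < a) (hb : 0 ≤ b) : 0 ≤ klr b a :=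
  (sq_nonneg _).trans (klr_hell ha hb)

lemma klr_upper {a b B : ℝ} (ha : 0 < a) (hb : 0 ≤ b) (h : klr b a ≤ B) :
    a ≤ (√b + √B) ^ 2 := by
  have h1 := (klr_hell ha hb).trans h
  have h2 := Real.abs_le_sqrt h1
  have h3 : √a ≤ √b + √B := by linarith [neg_abs_le (√b - √a)]
  calc a = √a ^ 2 := (Real.sq_sqrt ha.le).symm
    _ ≤ _ := by gcongr

lemma klr_lower {a b B : ℝ} (ha : 0 < a) (hb : 0 < b) (h : klr b a ≤ B) :
    b * Real.exp (-((B + b) / b)) ≤ a := by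
  unfold klr at h
  have h1 : Real.log (b / a) ≤ (B + b) / b := by
    rw [le_div_iff₀ hb]; linarith
  rw [Real.log_div hb.ne' ha.ne'] at h1
  rw [← Real.exp_log hb, ← Real.exp_add, Real.exp_log hb]
  calc _ ≤ Real.exp (Real.log a) := by
        apply Real.exp_le_exp.2; linarith
    _ = a := Real.exp_log ha

lemma log_diff_aux {p q s : ℝ} (hs : 0 < s) (hp : s ≤ p) (hq : s ≤ q) :
    Real.log p - Real.log q ≤ |p - q| / s := by
  have hp' := hs.trans_le hp
  have hq' := hs.trans_le hq
  rw [← Real.log_div hp'.ne' hq'.ne']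
  refine (Real.log_le_sub_one_of_pos (by positivity)).trans ?_
  have : p / q - 1 = (p - q) / q := by field_simp
  rw [this]
  calc (p - q) / q ≤ |p - q| / q := by gcongr; exact le_abs_self _
    _ ≤ _ := by gcongr

lemma log_diff {a b c B : ℝ} (hc : 0 < c) (ha : c ≤ a) (hb : c ≤ b) (h : klr b a ≤ B) :
    |Real.log b - Real.log a| ≤ 2 / √c * √B := by
  have ha' := hc.trans_le ha
  have hb' := hc.trans_le hb
  have h2 := Real.abs_le_sqrt ((klr_hell ha' hb'.le).trans h)
  have hsc : 0 < √c := by positivity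
  have e1 := log_diff_aux hsc (Real.sqrt_le_sqrt hb) (Real.sqrt_le_sqrt ha)
  have e2 := log_diff_aux hsc (Real.sqrt_le_sqrt ha) (Real.sqrt_le_sqrt hb)
  rw [abs_sub_comm] at e2
  rw [Real.log_sqrt ha'.le, Real.log_sqrt hb'.le] at e1 e2
  have h3 : |√b - √a| / √c ≤ √B / √c := by gcongr
  have : 2 / √c * √B = 2 * (√B / √c) := by ring
  rw [this, abs_le]; constructor <;> linarith

lemma val_diff {a b C B : ℝ} (ha0 : 0 < a) (hb0 : 0 < b) (ha : a ≤ C) (hb : b ≤ C)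
    (h : klr b a ≤ B) : |b - a| ≤ 2 * √C * √B := by
  have h2 := Real.abs_le_sqrt ((klr_hell ha0 hb0.le).trans h)
  have : b - a = (√b + √a) * (√b - √a) := by
    nlinarith [Real.sq_sqrt hb0.le, Real.sq_sqrt ha0.le]
  rw [this, abs_mul, abs_of_nonneg (by positivity)]
  have := Real.sqrt_le_sqrt ha
  have := Real.sqrt_le_sqrt hb
  gcongr
  linarith

lemma klr_tendsto {a : ℕ → ℝ} {b : ℝ} (ha : ∀ n, 0 < a n) (hb : 0 ≤ b)
    (h : Tendsto (fun n => klr b (a n)) atTop (𝓝 0)) : Tendsto a atTop (𝓝 b) := by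
  have h1 : Tendsto (fun n => (√b - √(a n)) ^ 2) atTop (𝓝 0) :=
    squeeze_zero (fun n => sq_nonneg _) (fun n => klr_hell (ha n) hb) h
  have h2 : Tendsto (fun n => |√b - √(a n)|) atTop (𝓝 0) := by
    have := (Real.continuous_sqrt.tendsto 0).comp h1
    simpa [Function.comp_def, Real.sqrt_sq_eq_abs] using this
  have h3 : Tendsto (fun n => √b - √(a n)) atTop (𝓝 0) :=
    (tendsto_zero_iff_abs_tendsto_zero _).2 h2
  have h4 : Tendsto (fun n => (√b - (√b - √(a n))) ^ 2) atTop (𝓝 ((√b - 0) ^ 2)) :=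
    (tendsto_const_nhds.sub h3).pow 2
  simpa [Real.sq_sqrt, hb, fun n => (ha n).le] using h4

lemma dyk_aux {a : ℕ → ℝ} (ha : ∀ n, 0 ≤ a n) {B : ℝ}
    (hB : ∀ n, ∑ k ∈ Finset.range n, a k ^ 2 ≤ B) {U K ε : ℝ} (hU : 0 ≤ U) (hK : 0 ≤ K)
    (hε : 0 < ε) (m : ℕ) :
    ∃ n ≥ m, a n * (U + K * ∑ k ∈ Finset.range (n + 1), a k) < ε := by
  by_contra! hcon
  have hB0 : 0 ≤ B := by simpa using hB 0
  set T : ℝ := 2 * (U ^ 2 + K ^ 2 * B) + 1 with hT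
  have hT0 : 0 < T := by positivity
  have hsq : ∀ n : ℕ, (U + K * ∑ k ∈ Finset.range (n + 1), a k) ^ 2 ≤ T * (n + 1) := by
    intro n
    have h1 := sq_sum_le_card_mul_sum_sq (s := Finset.range (n + 1)) (f := a)
    rw [Finset.card_range] at h1
    push_cast at h1
    set S := ∑ k ∈ Finset.range (n + 1), a k
    have h2 : S ^ 2 ≤ (n + 1) * B := h1.trans (by gcongr; exact hB _)
    have h3 : K ^ 2 * S ^ 2 ≤ K ^ 2 * ((n + 1) * B) := by gcongr
    have hn : (0 : ℝ) ≤ n := by positivity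
    nlinarith [sq_nonneg (U - K * S), mul_nonneg hn (sq_nonneg U)]
  have hlow : ∀ n ≥ m, ε ^ 2 / T * (1 / ((n : ℝ) + 1)) ≤ a n ^ 2 := by
    intro n hn
    have h1 := hcon n hn
    have h2 : ε ^ 2 ≤ a n ^ 2 * (T * (n + 1)) := by
      calc ε ^ 2 ≤ (a n * (U + K * ∑ k ∈ Finset.range (n + 1), a k)) ^ 2 := by gcongr
        _ = a n ^ 2 * (U + K * ∑ k ∈ Finset.range (n + 1), a k) ^ 2 := by ring
        _ ≤ _ := by gcongr; exact hsq n
    have hn : (0 : ℝ) < n + 1 := by positivity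
    rw [div_mul_div_comm, mul_one, div_le_iff₀ (by positivity)]
    exact h2
  have hsum : Summable (fun n => a n ^ 2) :=
    summable_of_sum_range_le (fun n => sq_nonneg _) hB
  have hsum2 : Summable (fun n : ℕ => ε ^ 2 / T * (1 / ((n : ℝ) + 1))) := by
    refine Summable.of_norm_bounded_eventually_nat hsum ?_
    filter_upwards [eventually_ge_atTop m] with n hn
    rw [Real.norm_of_nonneg (by positivity)]
    exact hlow n hn
  rw [summable_mul_left_iff (by positivity)] at hsum2
  have := (summable_nat_add_iff (f := fun n : ℕ => 1 / (n : ℝ)) 1).1 (by simpa using hsum2)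
  exact Real.not_summable_one_div_natCast this

lemma KLmat_eq {N : ℕ} (p μ : Fin N → Fin N → ℝ) :
    KLmat p μ = ∑ i, ∑ j, klr (p i j) (μ i j) := rfl

lemma conv_real {E : Type*} [AddCommGroup E] [Module ℝ E] [TopologicalSpace E]
    {f : E → EReal} (hf : ProperLSCConvex f) {x y : E} {r s : ℝ} (hx : f x = r) (hy : f y = s)
    {t : ℝ} (h0 : 0 ≤ t) (h1 : t ≤ 1) :
    f ((1 - t) • x + t • y) ≤ (((1 - t) * r + t * s : ℝ) : EReal) := by
  have := hf.2.2.2 x y (1 - t) t (by linarith) h0 (by ring)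
  rw [hx, hy] at this
  simpa using this

lemma prox_ineq {N : ℕ} {φ : (Fin N → Fin N → ℝ) → EReal} (hφ : ProperLSCConvex φ)
    {μ p σ : Fin N → Fin N → ℝ} (hp : IsKLProx φ μ p) {r s : ℝ} (hr : φ p = r) (hs : φ σ = s)
    {t : ℝ} (h0 : 0 ≤ t) (h1 : t ≤ 1) (hpos : ∀ i j, 0 ≤ ((1 - t) • p + t • σ) i j) :
    KLmat p μ + t * (r - s) ≤ KLmat ((1 - t) • p + t • σ) μ := by
  have h2 := hp.2 _ hpos
  have h3 := conv_real hφ hr hs h0 h1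
  have h4 := h2.trans (add_le_add_right h3 _)
  rw [hr] at h4
  norm_cast at h4
  linarith

lemma klr_conv {m p s t : ℝ} (hm : 0 < m) (hp : 0 ≤ p) (hs : 0 < s) (ht : 0 < t) (ht1 : t < 1) :
    klr ((1 - t) * p + t * s) m ≤ klr p m + t * (klr s m - klr p m) +
      (if p = 0 then s else 0) * (t * Real.log t) := by
  split_ifs with h
  · subst h
    unfold klr
    simp only [mul_zero, zero_add, zero_mul, sub_zero]
    rw [mul_div_assoc, Real.log_mul ht.ne' (by positivity)]
    apply le_of_eq; ring
  · have hp' : 0 < p := lt_of_le_of_ne hp (Ne.symm h)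
    have key : ∀ b w : ℝ, 0 < b → 0 < w → klr b m ≥ klr w m + Real.log (w / m) * (b - w) := by
      intro b w hb hw
      have := klr_nonneg hw hb.le
      unfold klr at *
      rw [Real.log_div hb.ne' hm.ne', Real.log_div hw.ne' hm.ne']
      rw [Real.log_div hb.ne' hw.ne'] at this
      nlinarith
    have h1t : 0 < 1 - t := by linarith
    set w := (1 - t) * p + t * s with hw
    have hwpos : 0 < w := by positivity
    have k1 := mul_le_mul_of_nonneg_left (key p w hp' hwpos) h1t.le
    have k2 := mul_le_mul_of_nonneg_left (key s w hs hwpos) ht.le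
    have : (1 - t) * (Real.log (w / m) * (p - w)) + t * (Real.log (w / m) * (s - w)) = 0 := by
      rw [hw]; ring
    linarith

lemma prox_fin {N : ℕ} {φ : (Fin N → Fin N → ℝ) → EReal} (hφ : ProperLSCConvex φ)
    {μ p σ : Fin N → Fin N → ℝ} (hp : IsKLProx φ μ p) 
    (hσ : ∀ i j, 0 < σ i j) {s : ℝ} (hs : φ σ = s) : ∃ r : ℝ, φ p = r := by
  have h := hp.2 σ (fun i j => (hσ i j).le)
  rw [hs] at h
  have hb := hφ.1 p
  generalize φ p = a at *
  induction a with
  | bot => simp at hb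
  | top => rw [EReal.coe_add_top, ← EReal.coe_add, top_le_iff] at h; exact absurd h (EReal.coe_ne_top _)
  | coe a => exact ⟨a, rfl⟩

lemma prox_pos {N : ℕ} {φ : (Fin N → Fin N → ℝ) → EReal} (hφ : ProperLSCConvex φ)
    {μ p σ : Fin N → Fin N → ℝ} (hμ : ∀ i j, 0 < μ i j) (hp : IsKLProx φ μ p)
    (hσ : ∀ i j, 0 < σ i j) {s : ℝ} (hs : φ σ = s) : ∀ i j, 0 < p i j := by
  obtain ⟨r, hr⟩ := prox_fin hφ hp hσ hs
  by_contra! hcon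
  obtain ⟨i₀, j₀, h0⟩ := hcon
  have h0 : p i₀ j₀ = 0 := le_antisymm h0 (hp.1 _ _)
  set W : ℝ := ∑ i, ∑ j, (if p i j = 0 then σ i j else 0) with hW
  have hWpos : 0 < W := by
    have hn : ∀ i j, 0 ≤ (if p i j = 0 then σ i j else 0) := by
      intro i j; split_ifs; exacts [(hσ i j).le, le_rfl]
    refine Finset.sum_pos' (fun i _ => Finset.sum_nonneg fun j _ => hn i j) ⟨i₀, Finset.mem_univ _, ?_⟩
    refine Finset.sum_pos' (fun j _ => hn _ j) ⟨j₀, Finset.mem_univ _, ?_⟩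
    rw [if_pos h0]; exact hσ _ _
  have main : ∀ t : ℝ, 0 < t → t < 1 → r - s ≤ (KLmat σ μ - KLmat p μ) + W * Real.log t := by
    intro t ht ht1
    have h1 := prox_ineq hφ hp hr hs ht.le ht1.le (fun i j => by
      have := hp.1 i j
      have := hσ i j
      have : 0 < 1 - t := by linarith
      simp only [Pi.add_apply, Pi.smul_apply, smul_eq_mul]
      positivity)
    have h2 : KLmat ((1 - t) • p + t • σ) μ ≤ KLmat p μ + t * (KLmat σ μ - KLmat p μ) +
        W * (t * Real.log t) := by
      simp only [KLmat_eq, hW, Finset.mul_sum, Finset.sum_mul, ← Finset.sum_add_distrib,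
        ← Finset.sum_sub_distrib]
      refine Finset.sum_le_sum fun i _ => Finset.sum_le_sum fun j _ => ?_
      exact klr_conv (hμ i j) (hp.1 i j) (hσ i j) ht ht1
    have h3 : t * (r - s) ≤ t * ((KLmat σ μ - KLmat p μ) + W * Real.log t) := by linarith
    exact le_of_mul_le_mul_left h3 ht
  set D := (KLmat σ μ - KLmat p μ) - (r - s) with hD
  have := main (Real.exp (-(|D| + 1) / W)) (Real.exp_pos _) (by
    rw [Real.exp_lt_one_iff]
    exact div_neg_of_neg_of_pos (by linarith [abs_nonneg D]) hWpos)
  rw [Real.log_exp, mul_div_cancel₀ _ hWpos.ne'] at this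
  linarith [le_abs_self D]

lemma prox_sub {N : ℕ} {φ : (Fin N → Fin N → ℝ) → EReal} (hφ : ProperLSCConvex φ)
    {μ p σ : Fin N → Fin N → ℝ} (hμ : ∀ i j, 0 < μ i j) (hp : IsKLProx φ μ p)
    (hpp : ∀ i j, 0 < p i j) {r s : ℝ} (hr : φ p = r) (hs : φ σ = s) :
    r + ∑ i, ∑ j, (Real.log (μ i j) - Real.log (p i j)) * (σ i j - p i j) ≤ s := by
  have hlim : ∀ i j, Tendsto (fun t : ℝ => ((1 - t) • p + t • σ) i j) (𝓝[>] 0) (𝓝 (p i j)) := by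
    intro i j
    have : Continuous (fun t : ℝ => ((1 - t) • p + t • σ) i j) := by
      simp only [Pi.add_apply, Pi.smul_apply, smul_eq_mul]; fun_prop
    have := (this.tendsto 0).mono_left (nhdsWithin_le_nhds (s := Set.Ioi 0))
    simpa using this
  have hev : ∀ᶠ t : ℝ in 𝓝[>] 0, ∀ i j, 0 < ((1 - t) • p + t • σ) i j := by
    rw [eventually_all]; intro i
    rw [eventually_all]; intro j
    exact (hlim i j).eventually_const_lt (hpp i j)
  have hlim2 : Tendsto (fun t : ℝ => ∑ i, ∑ j,
      (Real.log (μ i j) - Real.log (((1 - t) • p + t • σ) i j)) * (σ i j - p i j)) (𝓝[>] 0)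
      (𝓝 (∑ i, ∑ j, (Real.log (μ i j) - Real.log (p i j)) * (σ i j - p i j))) := by
    refine tendsto_finsetSum _ fun i _ => tendsto_finsetSum _ fun j _ => ?_
    exact ((hlim i j).log (hpp i j).ne').const_sub _ |>.mul_const _
  have : ∑ i, ∑ j, (Real.log (μ i j) - Real.log (p i j)) * (σ i j - p i j) ≤ s - r := by
    refine le_of_tendsto hlim2 ?_
    filter_upwards [hev, self_mem_nhdsWithin, Ioo_mem_nhdsGT (zero_lt_one' ℝ)] with t ht ht0 ht1
    have ht0 : 0 < t := ht0
    have h1 := prox_ineq hφ hp hr hs ht0.le ht1.2.le (fun i j => (ht i j).le)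
    have h2 : t * ∑ i, ∑ j, (Real.log (μ i j) - Real.log (((1 - t) • p + t • σ) i j)) * (σ i j - p i j)
        ≤ KLmat p μ - KLmat ((1 - t) • p + t • σ) μ := by
      simp only [KLmat_eq, Finset.mul_sum, ← Finset.sum_sub_distrib]
      refine Finset.sum_le_sum fun i _ => Finset.sum_le_sum fun j _ => ?_
      have hw := ht i j
      have hwe : ((1 - t) • p + t • σ) i j = (1 - t) * p i j + t * σ i j := rfl
      have hk := klr_nonneg hw (hpp i j).le
      unfold klr at *
      rw [Real.log_div (hpp i j).ne' (hμ i j).ne', Real.log_div hw.ne' (hμ i j).ne']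
      rw [Real.log_div (hpp i j).ne' hw.ne'] at hk
      generalize Real.log (((1 - t) • p + t • σ) i j) = lw at *
      rw [hwe] at hk ⊢
      linarith
    have h3 : t * ∑ i, ∑ j, (Real.log (μ i j) - Real.log (((1 - t) • p + t • σ) i j)) * (σ i j - p i j)
        ≤ t * (s - r) := by linarith
    exact le_of_mul_le_mul_left h3 ht0
  linarith

lemma KL_nonneg {N : ℕ} {p q : Fin N → Fin N → ℝ} (hp : ∀ i j, 0 ≤ p i j)
    (hq : ∀ i j, 0 < q i j) : 0 ≤ KLmat p q :=
  Finset.sum_nonneg fun i _ => Finset.sum_nonneg fun j _ => klr_nonneg (hq i j) (hp i j)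

lemma klr_le_KL {N : ℕ} {p q : Fin N → Fin N → ℝ} (hp : ∀ i j, 0 ≤ p i j)
    (hq : ∀ i j, 0 < q i j) (i j : Fin N) : klr (p i j) (q i j) ≤ KLmat p q := by
  rw [KLmat_eq]
  have hn : ∀ i j, 0 ≤ klr (p i j) (q i j) := fun i j => klr_nonneg (hq i j) (hp i j)
  refine (Finset.single_le_sum (f := fun j => klr (p i j) (q i j)) (fun j _ => hn i j)
    (Finset.mem_univ j)).trans ?_
  exact Finset.single_le_sum (f := fun i => ∑ j, klr (p i j) (q i j))
    (fun i _ => Finset.sum_nonneg fun j _ => hn i j) (Finset.mem_univ i)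

lemma core {N : ℕ} (ξ : Fin N → Fin N → ℝ) (hξ : ∀ i j, 0 < ξ i j)
    (φ₁ φ₂ : (Fin N → Fin N → ℝ) → EReal)
    (hφ₁ : ProperLSCConvex φ₁) (hφ₂ : ProperLSCConvex φ₂)
    (xb : Fin N → Fin N → ℝ) (hxb : ∀ i j, 0 < xb i j) (b₁ b₂ : ℝ)
    (hb₁ : φ₁ xb = b₁) (hb₂ : φ₂ xb = b₂)
    (x v : ℕ → Fin N → Fin N → ℝ) (r : ℕ → ℝ) (hx : ∀ n i j, 0 < x n i j)
    (hr : ∀ n, (if Odd (n + 1) then φ₁ else φ₂) (x (n + 1)) = r (n + 1))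
    (hsub : ∀ n σ (s : ℝ), (if Odd (n + 1) then φ₁ else φ₂) σ = s →
      r (n + 1) + ∑ i, ∑ j, v (n + 1) i j * (σ i j - x (n + 1) i j) ≤ s)
    (hlog : ∀ n i j, Real.log (x (n + 1) i j) =
      Real.log (ξ i j) - v (n + 1) i j - v n i j) :
      ∃ πs : Fin N → Fin N → ℝ,
        (∀ i j, 0 ≤ πs i j) ∧
        (∀ σ : Fin N → Fin N → ℝ, (∀ i j, 0 ≤ σ i j) →
          ((KLmat πs ξ : ℝ) : EReal) + φ₁ πs + φ₂ πs ≤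
            ((KLmat σ ξ : ℝ) : EReal) + φ₁ σ + φ₂ σ) ∧
        (∀ σ : Fin N → Fin N → ℝ, (∀ i j, 0 ≤ σ i j) →
          (∀ σ' : Fin N → Fin N → ℝ, (∀ i j, 0 ≤ σ' i j) →
            ((KLmat σ ξ : ℝ) : EReal) + φ₁ σ + φ₂ σ ≤
              ((KLmat σ' ξ : ℝ) : EReal) + φ₁ σ' + φ₂ σ') → σ = πs) ∧
        Tendsto x atTop (𝓝 πs) := by
  -- dual values
  obtain ⟨A, hA⟩ : ∃ A : ℕ → ℝ, ∀ n, A n = r n - ∑ i, ∑ j, v n i j * x n i j := ⟨_, fun _ => rfl⟩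
  obtain ⟨d, hd⟩ : ∃ d : ℕ → ℝ, ∀ n, d n = A (n + 2) + A (n + 1) +
    ∑ i, ∑ j, (ξ i j - x (n + 2) i j) := ⟨_, fun _ => rfl⟩
  have hAle : ∀ n σ (s : ℝ), (if Odd (n + 1) then φ₁ else φ₂) σ = s →
      A (n + 1) ≤ s - ∑ i, ∑ j, v (n + 1) i j * σ i j := by
    intro n σ s h
    have := hsub n σ s h
    simp only [mul_sub, Finset.sum_sub_distrib] at this
    rw [hA]; linarith
  have hKLid : ∀ n (σ : Fin N → Fin N → ℝ), (∀ i j, 0 ≤ σ i j) →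
      KLmat σ ξ = KLmat σ (x (n + 2)) - ∑ i, ∑ j, v (n + 2) i j * σ i j
        - ∑ i, ∑ j, v (n + 1) i j * σ i j + ∑ i, ∑ j, (ξ i j - x (n + 2) i j) := by
    intro n σ hσ
    simp only [KLmat_eq, ← Finset.sum_add_distrib, ← Finset.sum_sub_distrib]
    refine Finset.sum_congr rfl fun i _ => Finset.sum_congr rfl fun j _ => ?_
    rcases (hσ i j).eq_or_lt with h0 | h0
    · simp [klr, ← h0]
    · unfold klr
      rw [Real.log_div h0.ne' (hξ i j).ne', Real.log_div h0.ne' (hx _ i j).ne', hlog]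
      ring
  have hweak : ∀ n (σ : Fin N → Fin N → ℝ), (∀ i j, 0 ≤ σ i j) → ∀ s₁ s₂ : ℝ, φ₁ σ = s₁ →
      φ₂ σ = s₂ → d n + KLmat σ (x (n + 2)) ≤ KLmat σ ξ + s₁ + s₂ := by
    intro n σ hσ s₁ s₂ h₁ h₂
    rw [hKLid n σ hσ, hd]
    rcases Nat.even_or_odd n with hn | hn
    · have e1 := hAle n σ s₁ (by rw [if_pos hn.add_one, h₁])
      have e2 := hAle (n + 1) σ s₂ (by rw [if_neg (by simpa [parity_simps] using hn), h₂])
      linarith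
    · have e1 := hAle n σ s₂ (by rw [if_neg (by simpa [parity_simps] using hn), h₂])
      have e2 := hAle (n + 1) σ s₁ (by rw [if_pos (by simpa [parity_simps] using hn), h₁])
      linarith
  have hmono : ∀ n, d n + KLmat (x (n + 3)) (x (n + 2)) ≤ d (n + 1) := by
    intro n
    have hpar : (if Odd (n + 1) then φ₁ else φ₂) (x (n + 3)) = r (n + 3) := by
      rw [← hr (n + 2)]
      congr 1
      simp [parity_simps]
    have e1 := hAle n _ _ hpar
    have e2 : KLmat (x (n + 3)) (x (n + 2)) = ∑ i, ∑ j, v (n + 1) i j * x (n + 3) i j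
        - ∑ i, ∑ j, v (n + 3) i j * x (n + 3) i j - ∑ i, ∑ j, (ξ i j - x (n + 2) i j) * (-1)
        + ∑ i, ∑ j, (ξ i j - x (n + 3) i j) - 2 * ∑ i, ∑ j, (ξ i j - x (n + 2) i j) := by
      simp only [KLmat_eq, Finset.mul_sum, ← Finset.sum_add_distrib, ← Finset.sum_sub_distrib]
      refine Finset.sum_congr rfl fun i _ => Finset.sum_congr rfl fun j _ => ?_
      unfold klr
      rw [Real.log_div (hx _ i j).ne' (hx _ i j).ne', hlog (n + 1), hlog (n + 2)]
      ring
    simp only [mul_neg, mul_one, Finset.sum_neg_distrib] at e2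
    rw [hd, hd, hA (n + 1 + 2)]
    linarith
  have hgap : ∀ n, r (n + 2) + r (n + 1) + KLmat (x (n + 2)) ξ =
      d n + ∑ i, ∑ j, v (n + 1) i j * (x (n + 1) i j - x (n + 2) i j) := by
    intro n
    have e0 : KLmat (x (n + 2)) (x (n + 2)) = 0 := by
      simp only [KLmat_eq, klr]
      refine Finset.sum_eq_zero fun i _ => Finset.sum_eq_zero fun j _ => ?_
      simp [div_self (hx (n + 2) i j).ne']
    rw [hKLid n _ (fun i j => (hx _ i j).le), e0, hd, hA, hA]
    simp only [mul_sub, Finset.sum_sub_distrib]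
    ring
  -- bounds
  have hdmono : Monotone d := monotone_nat_of_le_succ fun n => by
    have := hmono n
    have := KL_nonneg (fun i j => (hx (n + 3) i j).le) (hx (n + 2))
    linarith
  set F : ℝ := KLmat xb ξ + b₁ + b₂ with hF
  have hdle : ∀ n, d n ≤ F := fun n => by
    have := hweak n xb (fun i j => (hxb i j).le) b₁ b₂ hb₁ hb₂
    have := KL_nonneg (fun i j => (hxb i j).le) (hx (n + 2))
    linarith
  have hbdd : BddAbove (Set.range d) := ⟨F, by rintro _ ⟨n, rfl⟩; exact hdle n⟩
  have hdt : Tendsto d atTop (𝓝 (⨆ n, d n)) := tendsto_atTop_ciSup hdmono hbdd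
  set dinf : ℝ := ⨆ n, d n
  have hdinf : ∀ n, d n ≤ dinf := fun n => le_ciSup hbdd n
  set B : ℝ := F - d 0 with hB
  have hKLB : ∀ n, KLmat xb (x (n + 2)) ≤ B := fun n => by
    have := hweak n xb (fun i j => (hxb i j).le) b₁ b₂ hb₁ hb₂
    have := hdmono (Nat.zero_le n)
    linarith
  have hB0 : 0 ≤ B := by linarith [hdle 0]
  have hup0 : ∀ n i j, x (n + 2) i j ≤ (√(xb i j) + √B) ^ 2 := fun n i j =>
    klr_upper (hx _ i j) (hxb i j).le
      ((klr_le_KL (fun i j => (hxb i j).le) (hx _) i j).trans (hKLB n))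
  have hlow0 : ∀ n i j, xb i j * Real.exp (-((B + xb i j) / xb i j)) ≤ x (n + 2) i j :=
    fun n i j => klr_lower (hx _ i j) (hxb i j)
      ((klr_le_KL (fun i j => (hxb i j).le) (hx _) i j).trans (hKLB n))
  obtain ⟨C, hC0, hC⟩ : ∃ C : ℝ, 0 ≤ C ∧ ∀ n i j, x (n + 2) i j ≤ C := by
    refine ⟨∑ i, ∑ j, (√(xb i j) + √B) ^ 2, by positivity, fun n i j => (hup0 n i j).trans ?_⟩
    refine (Finset.single_le_sum (f := fun j => (√(xb i j) + √B) ^ 2) (fun j _ => by positivity)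
      (Finset.mem_univ j)).trans ?_
    exact Finset.single_le_sum (f := fun i => ∑ j, (√(xb i j) + √B) ^ 2)
      (fun i _ => by positivity) (Finset.mem_univ i)
  obtain ⟨c, hc0, hc⟩ : ∃ c : ℝ, 0 < c ∧ ∀ n i j, c ≤ x (n + 2) i j := by
    let g : Fin N × Fin N → ℝ := fun q => xb q.1 q.2 * Real.exp (-((B + xb q.1 q.2) / xb q.1 q.2))
    have hg : ∀ q, 0 < g q := fun q => mul_pos (hxb _ _) (Real.exp_pos _)
    rcases isEmpty_or_nonempty (Fin N × Fin N) with he | he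
    · exact ⟨1, one_pos, fun n i j => (he.false (i, j)).elim⟩
    · obtain ⟨q, hq⟩ := Finite.exists_min g
      exact ⟨g q, hg q, fun n i j => (hq (i, j)).trans (hlow0 n i j)⟩
  -- step sizes
  obtain ⟨a, ha⟩ : ∃ a : ℕ → ℝ, ∀ n, a n = √(KLmat (x (n + 3)) (x (n + 2))) := ⟨_, fun _ => rfl⟩
  have ha0 : ∀ n, 0 ≤ a n := fun n => by rw [ha]; positivity
  have hKLx : ∀ n, 0 ≤ KLmat (x (n + 3)) (x (n + 2)) := fun n =>
    KL_nonneg (fun i j => (hx _ i j).le) (hx _)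
  have hasq : ∀ n, ∑ k ∈ Finset.range n, a k ^ 2 ≤ B := by
    intro n
    have : ∑ k ∈ Finset.range n, a k ^ 2 ≤ d n - d 0 := by
      rw [← Finset.sum_range_sub]
      refine Finset.sum_le_sum fun k _ => ?_
      rw [ha, Real.sq_sqrt (hKLx k)]
      linarith [hmono k]
    linarith [hdle n]
  obtain ⟨K, hK0, hKlog, hKval⟩ : ∃ K : ℝ, 0 ≤ K ∧
      (∀ n i j, |Real.log (x (n + 3) i j) - Real.log (x (n + 2) i j)| ≤ K * a n) ∧
      (∀ n i j, |x (n + 3) i j - x (n + 2) i j| ≤ K * a n) := by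
    refine ⟨max (2 / √c) (2 * √C), by positivity, fun n i j => ?_, fun n i j => ?_⟩
    · refine (log_diff hc0 (hc n i j) (hc (n + 1) i j)
        (klr_le_KL (fun i j => (hx _ i j).le) (hx _) i j)).trans ?_
      rw [← ha]
      exact mul_le_mul_of_nonneg_right (le_max_left _ _) (ha0 n)
    · refine (val_diff (hx _ i j) (hx _ i j) (hC n i j) (hC (n + 1) i j)
        (klr_le_KL (fun i j => (hx _ i j).le) (hx _) i j)).trans ?_
      rw [← ha]
      exact mul_le_mul_of_nonneg_right (le_max_right _ _) (ha0 n)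
  obtain ⟨U, hU0, hU⟩ : ∃ U : ℝ, 0 ≤ U ∧ ∀ i j, |v 1 i j| ≤ U ∧ |v 2 i j| ≤ U := by
    refine ⟨∑ i, ∑ j, (|v 1 i j| + |v 2 i j|), by positivity, fun i j => ?_⟩
    have : |v 1 i j| + |v 2 i j| ≤ ∑ i, ∑ j, (|v 1 i j| + |v 2 i j|) := by
      refine (Finset.single_le_sum (f := fun j => |v 1 i j| + |v 2 i j|) (fun j _ => by positivity)
        (Finset.mem_univ j)).trans ?_
      exact Finset.single_le_sum (f := fun i => ∑ j, (|v 1 i j| + |v 2 i j|))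
        (fun i _ => by positivity) (Finset.mem_univ i)
    constructor <;> linarith [abs_nonneg (v 1 i j), abs_nonneg (v 2 i j)]
  have hv : ∀ n i j, |v (n + 1) i j| ≤ U + K * ∑ k ∈ Finset.range n, a k ∧
      |v (n + 2) i j| ≤ U + K * ∑ k ∈ Finset.range (n + 1), a k := by
    intro n i j
    induction n with
    | zero =>
      have := hU i j
      have h0 := mul_nonneg hK0 (ha0 0)
      simp only [Finset.range_zero, Finset.sum_empty, mul_zero, add_zero, zero_add,
        Finset.range_one, Finset.sum_singleton]
      exact ⟨this.1, by linarith [this.2]⟩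
    | succ n ih =>
      refine ⟨ih.2, ?_⟩
      have e : v (n + 3) i j = v (n + 1) i j
          - (Real.log (x (n + 3) i j) - Real.log (x (n + 2) i j)) := by
        rw [hlog (n + 1), hlog (n + 2)]; ring
      have h1 := abs_sub (v (n + 1) i j) (Real.log (x (n + 3) i j) - Real.log (x (n + 2) i j))
      rw [← e] at h1
      have h2 := hKlog n i j
      have h3 := mul_nonneg hK0 (ha0 (n + 1))
      rw [Finset.sum_range_succ, Finset.sum_range_succ]
      show |v (n + 3) i j| ≤ _
      linarith [ih.1]
  -- vanishing gap along a subsequence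
  have hsel : ∀ k : ℕ, ∃ n ≥ k, r (n + 3) + r (n + 2) + KLmat (x (n + 3)) ξ ≤
      dinf + (1 / ((k : ℝ) + 1)) := by
    intro k
    have hk : (0 : ℝ) < 1 / ((k : ℝ) + 1) := by positivity
    obtain ⟨n, hn, hlt⟩ := dyk_aux ha0 hasq (U := N * N * K * U) (K := N * N * K * K)
      (by positivity) (by positivity) hk k
    refine ⟨n, hn, ?_⟩
    have h1 := hgap (n + 1)
    have h2 : ∑ i, ∑ j, v (n + 2) i j * (x (n + 2) i j - x (n + 3) i j) ≤
        ∑ i : Fin N, ∑ j : Fin N, (U + K * ∑ k ∈ Finset.range (n + 1), a k) * (K * a n) := by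
      refine Finset.sum_le_sum fun i _ => Finset.sum_le_sum fun j _ => ?_
      refine (le_abs_self _).trans ?_
      rw [abs_mul, abs_sub_comm]
      have := (hv n i j).2
      exact mul_le_mul this (hKval n i j) (abs_nonneg _) ((abs_nonneg _).trans this)
    simp only [Finset.sum_const, Finset.card_univ, Fintype.card_fin, nsmul_eq_mul] at h2
    have h3 := hdinf (n + 1)
    have h4 : (N : ℝ) * (N * ((U + K * ∑ k ∈ Finset.range (n + 1), a k) * (K * a n))) =
      a n * (N * N * K * U + N * N * K * K * ∑ k ∈ Finset.range (n + 1), a k) := by ring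
    rw [h4] at h2
    have h1' : r (n + 3) + r (n + 2) + KLmat (x (n + 3)) ξ = d (n + 1) +
      ∑ i, ∑ j, v (n + 2) i j * (x (n + 2) i j - x (n + 3) i j) := h1
    linarith
  choose f hf hfgap using hsel
  obtain ⟨xs, hxs, g, hg, hgt⟩ := (isCompact_Icc (a := fun (_ _ : Fin N) => (0 : ℝ))
    (b := fun _ _ => C)).tendsto_subseq (x := fun k => x (f k + 3)) (fun k =>
      ⟨fun i j => (hx _ i j).le, fun i j => hC (f k + 1) i j⟩)
  have hxs0 : ∀ i j, 0 ≤ xs i j := fun i j => hxs.1 i j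
  have hat : Tendsto a atTop (𝓝 0) := by
    have hs : Summable (fun n => a n ^ 2) := summable_of_sum_range_le (fun n => sq_nonneg _) hasq
    have := (Real.continuous_sqrt.tendsto 0).comp hs.tendsto_atTop_zero
    simpa [Function.comp_def, Real.sqrt_sq (ha0 _)] using this
  have hft : Tendsto (f ∘ g) atTop atTop :=
    tendsto_atTop_mono (fun k => (hg.id_le k).trans (hf (g k))) tendsto_id
  have ht3 : ∀ i j, Tendsto (fun k => x (f (g k) + 3) i j) atTop (𝓝 (xs i j)) := fun i j =>
    tendsto_pi_nhds.1 (tendsto_pi_nhds.1 hgt i) j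
  have ht2 : ∀ i j, Tendsto (fun k => x (f (g k) + 2) i j) atTop (𝓝 (xs i j)) := by
    intro i j
    have hz : Tendsto (fun n => x (n + 3) i j - x (n + 2) i j) atTop (𝓝 0) := by
      refine squeeze_zero_norm (fun n => hKval n i j) ?_
      simpa using hat.const_mul K
    have := (ht3 i j).sub (hz.comp hft)
    simpa [Function.comp_def] using this
  have hT3 : Tendsto (fun k => x (f (g k) + 3)) atTop (𝓝 xs) := hgt
  have hT2 : Tendsto (fun k => x (f (g k) + 2)) atTop (𝓝 xs) :=
    tendsto_pi_nhds.2 fun i => tendsto_pi_nhds.2 fun j => ht2 i j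
  have hKLcont : Tendsto (fun k => KLmat (x (f (g k) + 3)) ξ) atTop (𝓝 (KLmat xs ξ)) := by
    have hcont : Continuous fun p : Fin N → Fin N → ℝ => KLmat p ξ := by
      unfold KLmat
      refine continuous_finsetSum _ fun i _ => continuous_finsetSum _ fun j _ => ?_
      have hpi : Continuous fun p : Fin N → Fin N → ℝ => p i j := by fun_prop
      have e : ∀ p : Fin N → Fin N → ℝ, p i j * Real.log (p i j / ξ i j) - p i j + ξ i j =
          ξ i j * ((p i j / ξ i j) * Real.log (p i j / ξ i j)) - p i j + ξ i j := by
        intro p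
        rw [← mul_assoc, mul_div_cancel₀ _ (hξ i j).ne']
      simp_rw [e]
      have := Real.continuous_mul_log.comp (hpi.div_const (ξ i j))
      exact ((this.const_mul _).sub hpi).add continuous_const
    exact (hcont.tendsto xs).comp hT3
  have hlsc : ∀ c₁ c₂ : ℝ, (c₁ : EReal) < φ₁ xs → (c₂ : EReal) < φ₂ xs →
      c₁ + c₂ + KLmat xs ξ ≤ dinf := by
    intro c₁ c₂ h₁ h₂
    have e13 := hT3.eventually (hφ₁.2.2.1 xs _ h₁)
    have e12 := hT2.eventually (hφ₁.2.2.1 xs _ h₁)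
    have e23 := hT3.eventually (hφ₂.2.2.1 xs _ h₂)
    have e22 := hT2.eventually (hφ₂.2.2.1 xs _ h₂)
    have hl : Tendsto (fun k => c₁ + c₂ + KLmat (x (f (g k) + 3)) ξ) atTop
      (𝓝 (c₁ + c₂ + KLmat xs ξ)) := hKLcont.const_add _
    have hl2 : Tendsto (fun k => dinf + 1 / ((g k : ℝ) + 1)) atTop (𝓝 (dinf + 0)) :=
      (tendsto_one_div_add_atTop_nhds_zero_nat.comp hg.tendsto_atTop).const_add _
    rw [add_zero] at hl2
    refine le_of_tendsto_of_tendsto hl hl2 ?_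
    filter_upwards [e13, e12, e23, e22] with k k13 k12 k23 k22
    have hgk := hfgap (g k)
    have hr3 := hr (f (g k) + 2)
    have hr2 := hr (f (g k) + 1)
    rcases Nat.even_or_odd (f (g k)) with hn | hn
    · rw [if_pos (by simpa [parity_simps] using hn)] at hr3
      rw [if_neg (by simpa [parity_simps] using hn)] at hr2
      have k1 : (c₁ : EReal) < r (f (g k) + 2 + 1) := hr3 ▸ k13
      have k2 : (c₂ : EReal) < r (f (g k) + 1 + 1) := hr2 ▸ k22
      rw [EReal.coe_lt_coe_iff] at k1 k2
      have k1' : c₁ < r (f (g k) + 3) := k1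
      have k2' : c₂ < r (f (g k) + 2) := k2
      linarith
    · rw [if_neg (by simpa [parity_simps] using hn)] at hr3
      rw [if_pos (by simpa [parity_simps] using hn)] at hr2
      have k1 : (c₂ : EReal) < r (f (g k) + 2 + 1) := hr3 ▸ k23
      have k2 : (c₁ : EReal) < r (f (g k) + 1 + 1) := hr2 ▸ k12
      rw [EReal.coe_lt_coe_iff] at k1 k2
      have k1' : c₂ < r (f (g k) + 3) := k1
      have k2' : c₁ < r (f (g k) + 2) := k2
      linarith
  obtain ⟨l₁, hl₁⟩ : ∃ c : ℝ, (c : EReal) < φ₁ xs := by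
    obtain ⟨c, -, h⟩ := EReal.lt_iff_exists_real_btwn.1 (bot_lt_iff_ne_bot.2 (hφ₁.1 xs))
    exact ⟨c, h⟩
  obtain ⟨l₂, hl₂⟩ : ∃ c : ℝ, (c : EReal) < φ₂ xs := by
    obtain ⟨c, -, h⟩ := EReal.lt_iff_exists_real_btwn.1 (bot_lt_iff_ne_bot.2 (hφ₂.1 xs))
    exact ⟨c, h⟩
  obtain ⟨s₁, hs₁⟩ : ∃ s : ℝ, φ₁ xs = s := by
    have ht : φ₁ xs ≠ ⊤ := by
      intro h
      have := hlsc (dinf - l₂ - KLmat xs ξ + 1) l₂ (by rw [h]; exact EReal.coe_lt_top _) hl₂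
      linarith
    exact ⟨_, (EReal.coe_toReal ht (hφ₁.1 xs)).symm⟩
  obtain ⟨s₂, hs₂⟩ : ∃ s : ℝ, φ₂ xs = s := by
    have ht : φ₂ xs ≠ ⊤ := by
      intro h
      have := hlsc l₁ (dinf - l₁ - KLmat xs ξ + 1) hl₁ (by rw [h]; exact EReal.coe_lt_top _)
      linarith
    exact ⟨_, (EReal.coe_toReal ht (hφ₂.1 xs)).symm⟩
  have hopt : KLmat xs ξ + s₁ + s₂ ≤ dinf := by
    refine le_of_forall_pos_le_add fun ε hε => ?_
    have := hlsc (s₁ - ε / 2) (s₂ - ε / 2) (by rw [hs₁, EReal.coe_lt_coe_iff]; linarith)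
      (by rw [hs₂, EReal.coe_lt_coe_iff]; linarith)
    linarith
  have hconv : ∀ σ : Fin N → Fin N → ℝ, (∀ i j, 0 ≤ σ i j) → ∀ t₁ t₂ : ℝ, φ₁ σ = t₁ →
      φ₂ σ = t₂ → KLmat σ ξ + t₁ + t₂ ≤ dinf → Tendsto x atTop (𝓝 σ) := by
    intro σ hσ t₁ t₂ h₁ h₂ hle
    rw [← tendsto_add_atTop_iff_nat 2]
    refine tendsto_pi_nhds.2 fun i => tendsto_pi_nhds.2 fun j => ?_
    refine klr_tendsto (fun n => hx _ i j) (hσ i j) ?_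
    refine squeeze_zero (g := fun n => dinf - d n) (fun n => klr_nonneg (hx _ i j) (hσ i j))
      (fun n => ?_) (by simpa using hdt.const_sub dinf)
    have := hweak n σ hσ t₁ t₂ h₁ h₂
    have := klr_le_KL hσ (hx (n + 2)) i j
    linarith
  have hlim := hconv xs hxs0 s₁ s₂ hs₁ hs₂ hopt
  have hcases : ∀ σ : Fin N → Fin N → ℝ, (∃ t₁ t₂ : ℝ, φ₁ σ = t₁ ∧ φ₂ σ = t₂) ∨
      ((KLmat σ ξ : ℝ) : EReal) + φ₁ σ + φ₂ σ = ⊤ := by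
    intro σ
    by_cases h1 : φ₁ σ = ⊤
    · right
      rw [h1, EReal.coe_add_top, EReal.top_add_of_ne_bot (hφ₂.1 σ)]
    by_cases h2 : φ₂ σ = ⊤
    · right
      rw [h2, ← EReal.coe_toReal h1 (hφ₁.1 σ), ← EReal.coe_add, EReal.coe_add_top]
    exact Or.inl ⟨_, _, (EReal.coe_toReal h1 (hφ₁.1 σ)).symm, (EReal.coe_toReal h2 (hφ₂.1 σ)).symm⟩
  refine ⟨xs, hxs0, ?_, ?_, hlim⟩
  · intro σ hσ
    rcases hcases σ with ⟨t₁, t₂, h₁, h₂⟩ | h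
    · rw [hs₁, hs₂, h₁, h₂]
      norm_cast
      refine hopt.trans (ciSup_le fun n => ?_)
      have := hweak n σ hσ t₁ t₂ h₁ h₂
      have := KL_nonneg hσ (hx (n + 2))
      linarith
    · rw [h]; exact le_top
  · intro σ hσ hmin
    have hle := hmin xs hxs0
    rcases hcases σ with ⟨t₁, t₂, h₁, h₂⟩ | h
    · rw [hs₁, hs₂, h₁, h₂] at hle
      norm_cast at hle
      exact tendsto_nhds_unique (hconv σ hσ t₁ t₂ h₁ h₂ (hle.trans hopt)) hlim
    · rw [h, hs₁, hs₂, ← EReal.coe_add, ← EReal.coe_add, top_le_iff] at hle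
      exact absurd hle (EReal.coe_ne_top _)

/-- Convergence of Dykstra's algorithm for the KL divergence.
Here `z k` encodes `z^{(k-1)}`, so that `z 0 = z^{(-1)}` and `z 1 = z^{(0)}`. -/
theorem dykstra_KL_converges {N : ℕ} (hN : 1 ≤ N)
    (ξ : Fin N → Fin N → ℝ) (hξ : ∀ i j, 0 < ξ i j)
    (φ₁ φ₂ : (Fin N → Fin N → ℝ) → EReal)
    (hφ₁ : ProperLSCConvex φ₁) (hφ₂ : ProperLSCConvex φ₂)
    (hqual : (intrinsicInterior ℝ {π | φ₁ π ≠ ⊤} ∩ intrinsicInterior ℝ {π | φ₂ π ≠ ⊤} ∩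
      {π : Fin N → Fin N → ℝ | ∀ i j, 0 < π i j}).Nonempty)
    (π : ℕ → Fin N → Fin N → ℝ) (z : ℕ → Fin N → Fin N → ℝ)
    (hπ0 : π 0 = ξ)
    (hz0 : z 0 = fun _ _ => 1) (hz1 : z 1 = fun _ _ => 1)
    (hπrec : ∀ ℓ : ℕ, 1 ≤ ℓ →
      IsKLProx (if Odd ℓ then φ₁ else φ₂)
        (fun i j => π (ℓ - 1) i j * z (ℓ - 1) i j) (π ℓ))
    (hzrec : ∀ ℓ : ℕ, 1 ≤ ℓ →
      z (ℓ + 1) = fun i j => z (ℓ - 1) i j * π (ℓ - 1) i j / π ℓ i j) :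
    (∀ ℓ : ℕ, ∀ i j, 0 < π ℓ i j) ∧
      ∃ πs : Fin N → Fin N → ℝ,
        (∀ i j, 0 ≤ πs i j) ∧
        (∀ σ : Fin N → Fin N → ℝ, (∀ i j, 0 ≤ σ i j) →
          ((KLmat πs ξ : ℝ) : EReal) + φ₁ πs + φ₂ πs ≤
            ((KLmat σ ξ : ℝ) : EReal) + φ₁ σ + φ₂ σ) ∧
        (∀ σ : Fin N → Fin N → ℝ, (∀ i j, 0 ≤ σ i j) →
          (∀ σ' : Fin N → Fin N → ℝ, (∀ i j, 0 ≤ σ' i j) →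
            ((KLmat σ ξ : ℝ) : EReal) + φ₁ σ + φ₂ σ ≤
              ((KLmat σ' ξ : ℝ) : EReal) + φ₁ σ' + φ₂ σ') → σ = πs) ∧
        Tendsto π atTop (𝓝 πs) := by
  obtain ⟨xb, ⟨hm1, hm2⟩, hxb⟩ := hqual
  have hd1 : φ₁ xb ≠ ⊤ := intrinsicInterior_subset (𝕜 := ℝ) hm1
  have hd2 : φ₂ xb ≠ ⊤ := intrinsicInterior_subset (𝕜 := ℝ) hm2
  have hxb : ∀ i j, 0 < xb i j := hxb
  have hb1 := (EReal.coe_toReal hd1 (hφ₁.1 xb)).symm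
  have hb2 := (EReal.coe_toReal hd2 (hφ₂.1 xb)).symm
  have hΦ : ∀ n : ℕ, ProperLSCConvex (if Odd n then φ₁ else φ₂) := by
    intro n; split_ifs; exacts [hφ₁, hφ₂]
  have hΦb : ∀ n : ℕ, ∃ b : ℝ, (if Odd n then φ₁ else φ₂) xb = b := by
    intro n; split_ifs; exacts [⟨_, hb1⟩, ⟨_, hb2⟩]
  have hrec : ∀ n, IsKLProx (if Odd (n + 1) then φ₁ else φ₂)
      (fun i j => π n i j * z n i j) (π (n + 1)) := fun n => hπrec (n + 1) (by omega)
  have hzr : ∀ n, z (n + 2) = fun i j => z n i j * π n i j / π (n + 1) i j :=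
    fun n => hzrec (n + 1) (by omega)
  have hpos : ∀ n, (∀ i j, 0 < π n i j) ∧ (∀ i j, 0 < z n i j) ∧ (∀ i j, 0 < z (n + 1) i j) := by
    intro n
    induction n with
    | zero =>
      refine ⟨by rw [hπ0]; exact hξ, fun i j => by rw [hz0]; exact one_pos,
        fun i j => by rw [hz1]; exact one_pos⟩
    | succ n ih =>
      obtain ⟨h1, h2, h3⟩ := ih
      obtain ⟨b, hb⟩ := hΦb (n + 1)
      have hp := prox_pos (hΦ (n + 1)) (fun i j => mul_pos (h1 i j) (h2 i j)) (hrec n) hxb hb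
      refine ⟨hp, h3, fun i j => ?_⟩
      rw [hzr]
      exact div_pos (mul_pos (h2 i j) (h1 i j)) (hp i j)
  have hpp : ∀ n i j, 0 < π n i j := fun n => (hpos n).1
  have hzp : ∀ n i j, 0 < z n i j := fun n => (hpos n).2.1
  have hzlog : ∀ n i j, Real.log (z (n + 2) i j) =
      Real.log (z n i j) + Real.log (π n i j) - Real.log (π (n + 1) i j) := by
    intro n i j
    rw [hzr]
    rw [Real.log_div (mul_pos (hzp n i j) (hpp n i j)).ne' (hpp _ i j).ne',
      Real.log_mul (hzp n i j).ne' (hpp n i j).ne']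
  refine ⟨hpp, ?_⟩
  have hrex : ∀ n, ∃ r : ℝ, (if Odd (n + 1) then φ₁ else φ₂) (π (n + 1)) = r := by
    intro n
    obtain ⟨b, hb⟩ := hΦb (n + 1)
    exact prox_fin (hΦ (n + 1)) (hrec n) hxb hb
  choose r hr using hrex
  refine core ξ hξ φ₁ φ₂ hφ₁ hφ₂ xb hxb _ _ hb1 hb2 π
    (fun n i j => Real.log (z (n + 1) i j)) (fun n => r (n - 1)) hpp hr ?_ ?_
  · intro n σ s hs
    have := prox_sub (hΦ (n + 1)) (fun i j => mul_pos (hpp n i j) (hzp n i j)) (hrec n)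
      (hpp (n + 1)) (hr n) hs
    refine le_trans (le_of_eq ?_) this
    congr 1
    refine Finset.sum_congr rfl fun i _ => Finset.sum_congr rfl fun j _ => ?_
    congr 1
    show Real.log (z (n + 2) i j) = _
    rw [hzlog, Real.log_mul (hpp n i j).ne' (hzp n i j).ne']
    ring
  · intro n i j
    have inv : ∀ n, Real.log (π n i j) + Real.log (z (n + 1) i j) + Real.log (z n i j) =
        Real.log (ξ i j) := by
      intro n
      induction n with
      | zero => simp [hπ0, hz0, hz1]
      | succ n ih =>
        have := hzlog n i j
        show Real.log (π (n + 1) i j) + Real.log (z (n + 2) i j) + _ = _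
        linarith
    have := inv (n + 1)
    show _ = _ - Real.log (z (n + 1 + 1) i j) - _
    linarith
end
end

section
/- Let N ≥ 1, let π ∈ ℝ^{N×N} have strictly positive entries, and let q ∈ ℝ^N have strictly positive entries. Then the unique minimizer of π̃ ↦ KL(π̃|π) over the set C_q = {π̃ ∈ ℝ_+^{N×N} : π̃^T𝟙 = q} is given by the column rescaling π̃_{ij} = π_{ij} · q_j / (Σ_k π_{kj}); in matrix form, Prox^{KL}_{ι_{C_q}}(π) = π · diag(q ⊘ (π^T𝟙)). -/
open scoped BigOperators

noncomputable section

/-- `x` is the unique minimizer of `F` over `S`. -/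
def IsUniqMinOn {α β : Type*} [Preorder β] (F : α → β) (S : Set α) (x : α) : Prop :=
  x ∈ S ∧ (∀ y ∈ S, F x ≤ F y) ∧ ∀ y ∈ S, (∀ z ∈ S, F y ≤ F z) → y = x

theorem klpt_pos {a b : ℝ} (ha : 0 ≤ a) (hb : 0 < b) (h : a ≠ b) :
    0 < a * Real.log (a / b) - a + b := by
  rcases ha.eq_or_lt with rfl | ha
  · simpa using hb
  · have h1 : b / a ≠ 1 := by
      intro h2
      rw [div_eq_one_iff_eq ha.ne'] at h2
      exact h h2.symm
    have h2 := Real.log_lt_sub_one_of_pos (div_pos hb ha) h1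
    have h3 : Real.log (a / b) = - Real.log (b / a) := by
      rw [← Real.log_inv, inv_div]
    have h4 := mul_lt_mul_of_pos_left h2 ha
    have h5 : a * (b / a - 1) = b - a := by field_simp
    rw [h3]
    linarith

theorem klpt_nonneg {a b : ℝ} (ha : 0 ≤ a) (hb : 0 < b) :
    0 ≤ a * Real.log (a / b) - a + b := by
  by_cases h : a = b
  · subst h
    simp [hb.ne']
  · exact (klpt_pos ha hb h).le

theorem klmat_nonneg {N : ℕ} {σ x : Fin N → Fin N → ℝ} (hσ : ∀ i j, 0 ≤ σ i j)
    (hx : ∀ i j, 0 < x i j) : 0 ≤ KLmat σ x :=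
  Finset.sum_nonneg fun i _ => Finset.sum_nonneg fun j _ => klpt_nonneg (hσ i j) (hx i j)

theorem klmat_self {N : ℕ} {x : Fin N → Fin N → ℝ}
    (hx : ∀ i j, 0 < x i j) : KLmat x x = 0 := by
  unfold KLmat
  refine Finset.sum_eq_zero fun i _ => Finset.sum_eq_zero fun j _ => ?_
  simp [(hx i j).ne']

theorem klmat_eq {N : ℕ} {σ x : Fin N → Fin N → ℝ} (hσ : ∀ i j, 0 ≤ σ i j)
    (hx : ∀ i j, 0 < x i j) (h : KLmat σ x ≤ 0) : σ = x := by
  by_contra hne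
  have : ∃ i j, σ i j ≠ x i j := by
    by_contra hc
    push Not at hc
    exact hne (funext fun i => funext fun j => hc i j)
  obtain ⟨i, j, hij⟩ := this
  have hp := klpt_pos (hσ i j) (hx i j) hij
  have : 0 < KLmat σ x :=
    Finset.sum_pos' (fun i _ => Finset.sum_nonneg fun j _ => klpt_nonneg (hσ i j) (hx i j))
      ⟨i, Finset.mem_univ _, Finset.sum_pos' (fun j _ => klpt_nonneg (hσ i j) (hx i j))
        ⟨j, Finset.mem_univ _, hp⟩⟩
  linarith

theorem klmat_decomp {N : ℕ} {σ π x : Fin N → Fin N → ℝ} {q c : Fin N → ℝ}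
    (hπ : ∀ i j, 0 < π i j) (hc : ∀ j, 0 < c j) (hx : ∀ i j, x i j = π i j * c j)
    (hσ : ∀ i j, 0 ≤ σ i j) (hs : ∀ j, ∑ i, σ i j = q j) :
    KLmat σ π = KLmat σ x + (∑ j, q j * Real.log (c j) + ∑ i, ∑ j, (π i j - x i j)) := by
  have e : ∑ j, q j * Real.log (c j) = ∑ i, ∑ j, σ i j * Real.log (c j) := by
    rw [Finset.sum_comm]
    refine Finset.sum_congr rfl fun j _ => ?_
    rw [← Finset.sum_mul, hs]
  rw [e]
  unfold KLmat
  simp only [← Finset.sum_add_distrib]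
  refine Finset.sum_congr rfl fun i _ => Finset.sum_congr rfl fun j _ => ?_
  rcases (hσ i j).eq_or_lt with h | h
  · rw [← h]; ring
  · have : Real.log (σ i j / π i j) = Real.log (σ i j / x i j) + Real.log (c j) := by
      have hp := hπ i j
      have hcj := hc j
      rw [hx, ← Real.log_mul (by positivity) hcj.ne']
      congr 1
      field_simp
    rw [this]; ring

/-- The KL projection onto the column-marginal constraint set
`C_q = {π̃ ≥ 0 : π̃ᵀ𝟙 = q}` is the column rescaling `π̃_{ij} = π_{ij} q_j / Σ_k π_{kj}`. -/
theorem KL_proj_col_marginal {N : ℕ} (hN : 1 ≤ N)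
    (π : Fin N → Fin N → ℝ) (hπ : ∀ i j, 0 < π i j)
    (q : Fin N → ℝ) (hq : ∀ j, 0 < q j) :
    IsUniqMinOn (fun σ => KLmat σ π)
      {σ : Fin N → Fin N → ℝ | (∀ i j, 0 ≤ σ i j) ∧ ∀ j, ∑ i, σ i j = q j}
      (fun i j => π i j * q j / ∑ k, π k j) := by
  have hS : ∀ j, 0 < ∑ k, π k j := fun j =>
    Finset.sum_pos (fun k _ => hπ k j) ⟨⟨0, hN⟩, Finset.mem_univ _⟩
  set x : Fin N → Fin N → ℝ := fun i j => π i j * q j / ∑ k, π k j with hxd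
  have hx : ∀ i j, 0 < x i j := fun i j => div_pos (mul_pos (hπ i j) (hq j)) (hS j)
  have hxs : ∀ j, ∑ i, x i j = q j := by
    intro j
    simp only [hxd]
    rw [← Finset.sum_div, ← Finset.sum_mul, mul_div_assoc, mul_div_cancel₀ _ (hS j).ne']
  have hdec := fun (σ : Fin N → Fin N → ℝ) => klmat_decomp (σ := σ) (π := π) (x := x) (q := q)
    (c := fun j => q j / ∑ k, π k j) hπ (fun j => div_pos (hq j) (hS j))
    (fun i j => mul_div_assoc _ _ _)
  have hxx := hdec x (fun i j => (hx i j).le) hxs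
  rw [klmat_self hx] at hxx
  refine ⟨⟨fun i j => (hx i j).le, hxs⟩, ?_, ?_⟩
  · rintro y ⟨hy, hys⟩
    have h1 := hdec y hy hys
    have h2 := klmat_nonneg hy hx
    show KLmat x π ≤ KLmat y π
    linarith
  · rintro y ⟨hy, hys⟩ hmin
    have h1 := hdec y hy hys
    have h2 : KLmat y π ≤ KLmat x π := hmin x ⟨fun i j => (hx i j).le, hxs⟩
    exact klmat_eq hy hx (by linarith)
end
end

section
/- Let N ≥ 1, let π ∈ ℝ^{N×N} have strictly positive entries, and let p ∈ ℝ^N have strictly positive entries. Then the unique minimizer of π̃ ↦ KL(π̃|π) over the set {π̃ ∈ ℝ_+^{N×N} : π̃𝟙 = p} is given by the row rescaling π̃_{ij} = p_i · π_{ij} / (Σ_k π_{ik}); in matrix form it equals diag(p ⊘ (π𝟙)) · π. -/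
open scoped BigOperators

noncomputable section

theorem klterm_nonneg (a b : ℝ) (ha : 0 ≤ a) (hb : 0 < b) :
    0 ≤ a * Real.log (a / b) - a + b ∧ (a * Real.log (a / b) - a + b = 0 → a = b) := by
  have h : a * Real.log (a / b) - a + b = b * InformationTheory.klFun (a / b) := by
    unfold InformationTheory.klFun
    field_simp
    ring
  have h0 : 0 ≤ a / b := by positivity
  rw [h]
  refine ⟨mul_nonneg hb.le (InformationTheory.klFun_nonneg h0), fun h1 => ?_⟩
  have h2 : InformationTheory.klFun (a / b) = 0 := by
    rcases mul_eq_zero.mp h1 with h | h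
    · exact absurd h hb.ne'
    · exact h
  rw [InformationTheory.klFun_eq_zero_iff h0] at h2
  field_simp at h2
  exact h2

theorem KLmat_nonneg {N : ℕ} (σ x : Fin N → Fin N → ℝ) (hσ : ∀ i j, 0 ≤ σ i j)
    (hx : ∀ i j, 0 < x i j) : 0 ≤ KLmat σ x :=
  Finset.sum_nonneg fun i _ => Finset.sum_nonneg fun j _ =>
    (klterm_nonneg _ _ (hσ i j) (hx i j)).1

theorem KLmat_eq_zero {N : ℕ} (σ x : Fin N → Fin N → ℝ) (hσ : ∀ i j, 0 ≤ σ i j)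
    (hx : ∀ i j, 0 < x i j) (h : KLmat σ x = 0) : σ = x := by
  unfold KLmat at h
  rw [Finset.sum_eq_zero_iff_of_nonneg (fun i _ => Finset.sum_nonneg fun j _ =>
    (klterm_nonneg _ _ (hσ i j) (hx i j)).1)] at h
  funext i j
  have h1 := h i (Finset.mem_univ i)
  rw [Finset.sum_eq_zero_iff_of_nonneg (fun j _ =>
    (klterm_nonneg _ _ (hσ i j) (hx i j)).1)] at h1
  exact (klterm_nonneg _ _ (hσ i j) (hx i j)).2 (h1 j (Finset.mem_univ j))

theorem KLmat_shift {N : ℕ} (σ π : Fin N → Fin N → ℝ) (c p : Fin N → ℝ)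
    (hσ : ∀ i, ∑ j, σ i j = p i) (hπ : ∀ i j, 0 < π i j) (hc : ∀ i, 0 < c i) :
    KLmat σ π = KLmat σ (fun i j => c i * π i j) +
      ∑ i, (p i * Real.log (c i) + ∑ j, (π i j - c i * π i j)) := by
  unfold KLmat
  rw [← Finset.sum_add_distrib]
  refine Finset.sum_congr rfl fun i _ => ?_
  rw [← hσ i, Finset.sum_mul, ← Finset.sum_add_distrib, ← Finset.sum_add_distrib]
  refine Finset.sum_congr rfl fun j _ => ?_
  by_cases h : σ i j = 0
  · simp [h]
  · have h1 := (hπ i j).ne'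
    have h2 := (hc i).ne'
    rw [Real.log_div h h1, Real.log_div h (mul_ne_zero h2 h1), Real.log_mul h2 h1]
    ring

/-- The KL projection onto the row-marginal constraint set
`{π̃ ≥ 0 : π̃𝟙 = p}` is the row rescaling `π̃_{ij} = p_i π_{ij} / Σ_k π_{ik}`. -/
theorem KL_proj_row_marginal {N : ℕ} (hN : 1 ≤ N)
    (π : Fin N → Fin N → ℝ) (hπ : ∀ i j, 0 < π i j)
    (p : Fin N → ℝ) (hp : ∀ i, 0 < p i) :
    IsUniqMinOn (fun σ => KLmat σ π)
      {σ : Fin N → Fin N → ℝ | (∀ i j, 0 ≤ σ i j) ∧ ∀ i, ∑ j, σ i j = p i}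
      (fun i j => p i * π i j / ∑ k, π i k) := by
  have hs : ∀ i, 0 < ∑ k, π i k := fun i =>
    Finset.sum_pos (fun k _ => hπ i k) ⟨i, Finset.mem_univ i⟩
  have hc : ∀ i, 0 < p i / ∑ k, π i k := fun i => div_pos (hp i) (hs i)
  have hxe : (fun i j => p i * π i j / ∑ k, π i k) =
      (fun i j => (p i / ∑ k, π i k) * π i j) := by
    funext i j
    ring
  rw [hxe]
  generalize hcd : (fun i => p i / ∑ k, π i k) = c
  have hci : ∀ i, p i / ∑ k, π i k = c i := fun i => by rw [← hcd]
  simp only [hci] at hc ⊢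
  have hx : ∀ i j, 0 < c i * π i j := fun i j => mul_pos (hc i) (hπ i j)
  have hxs : ∀ i, ∑ j, c i * π i j = p i := fun i => by
    rw [← Finset.mul_sum, ← hci i, div_mul_cancel₀ _ (hs i).ne']
  have hself : KLmat (fun i j => c i * π i j) (fun i j => c i * π i j) = 0 := by
    unfold KLmat
    refine Finset.sum_eq_zero fun i _ => Finset.sum_eq_zero fun j _ => ?_
    simp [div_self (hx i j).ne']
  have hxπ := KLmat_shift (fun i j => c i * π i j) π c p hxs hπ hc
  rw [hself] at hxπ
  refine ⟨⟨fun i j => (hx i j).le, hxs⟩, fun y hy => ?_, fun y hy hmin => ?_⟩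
  · have h1 := KLmat_shift y π c p hy.2 hπ hc
    have h2 := KLmat_nonneg y (fun i j => c i * π i j) hy.1 hx
    show KLmat _ π ≤ KLmat y π
    linarith
  · have h1 := KLmat_shift y π c p hy.2 hπ hc
    have h2 := KLmat_nonneg y (fun i j => c i * π i j) hy.1 hx
    have h3 : KLmat y π ≤ KLmat (fun i j => c i * π i j) π :=
      hmin _ ⟨fun i j => (hx i j).le, hxs⟩
    exact KLmat_eq_zero y _ hy.1 hx (by linarith)
end
end

section
/- Let N ≥ 1, σ > 0, κ > 0, w ∈ ℝ^N, and define f(p) = ι_{[0,κ]^N}(p) + ⟨w,p⟩ for p ∈ ℝ^N. Then for every p ∈ ℝ^N with strictly positive entries, the unique minimizer of p̃ ↦ KL(p̃|p) + σ f(p̃) over ℝ_+^N is given componentwise by (Prox^{KL}_{σf}(p))_i = min(p_i e^{−σ w_i}, κ). -/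
open scoped BigOperators
open scoped Classical

noncomputable section

def KLvec {N : ℕ} (p q : Fin N → ℝ) : ℝ :=
  ∑ i, (p i * Real.log (p i / q i) - p i + q i)

theorem ent_pos (x y : ℝ) (hx : 0 < x) (hy : 0 ≤ y) (hne : y ≠ x) :
    0 < y * (Real.log y - Real.log x) - y + x := by
  rcases hy.eq_or_lt with h | h
  · subst h; simpa using hx
  · have h1 : x / y ≠ 1 := by
      intro h2
      rw [div_eq_one_iff_eq h.ne'] at h2
      exact hne h2.symm
    have h2 := Real.log_lt_sub_one_of_pos (div_pos hx h) h1
    rw [Real.log_div hx.ne' h.ne'] at h2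
    have h3 := mul_lt_mul_of_pos_left h2 h
    have h4 : y * (x / y - 1) = x - y := by field_simp
    linarith

theorem scalar_lt (c κ p y : ℝ) (hκ : 0 < κ) (hp : 0 < p) (hy : 0 ≤ y) (hyκ : y ≤ κ)
    (hne : y ≠ min (p * Real.exp (-c)) κ) :
    (min (p * Real.exp (-c)) κ * Real.log (min (p * Real.exp (-c)) κ / p)
      - min (p * Real.exp (-c)) κ + p) + c * min (p * Real.exp (-c)) κ
    < (y * Real.log (y / p) - y + p) + c * y := by
  have hpe : 0 < p * Real.exp (-c) := by positivity
  have hlog : Real.log (p * Real.exp (-c)) = Real.log p - c := by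
    rw [Real.log_mul hp.ne' (Real.exp_pos _).ne', Real.log_exp]; ring
  have key : 0 ≤ (y - min (p * Real.exp (-c)) κ) *
      (Real.log (min (p * Real.exp (-c)) κ) - Real.log p + c) := by
    rcases le_total (p * Real.exp (-c)) κ with h | h
    · rw [min_eq_left h, hlog]; apply le_of_eq; ring
    · rw [min_eq_right h]
      have := Real.log_le_log hκ h
      apply mul_nonneg_of_nonpos_of_nonpos <;> linarith
  have hx : 0 < min (p * Real.exp (-c)) κ := lt_min hpe hκ
  generalize min (p * Real.exp (-c)) κ = x at *
  have e := ent_pos x y hx hy hne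
  have hyl : y * Real.log (y / p) = y * (Real.log y - Real.log p) := by
    rcases hy.eq_or_lt with h | h
    · subst h; simp
    · rw [Real.log_div h.ne' hp.ne']
  rw [hyl, Real.log_div hx.ne' hp.ne']
  nlinarith

/-- For `f(p̃) = ι_{[0,κ]^N}(p̃) + ⟨w,p̃⟩`, the KL proximal operator is
`Prox^{KL}_{σf}(p) = min(p ⊙ e^{-σw}, κ)` componentwise. -/
theorem KL_prox_box_linear {N : ℕ} (hN : 1 ≤ N)
    (σ κ : ℝ) (hσ : 0 < σ) (hκ : 0 < κ) (w : Fin N → ℝ)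
    (f : (Fin N → ℝ) → EReal)
    (hf : f = fun r =>
      if ∀ i, 0 ≤ r i ∧ r i ≤ κ then ((∑ i, w i * r i : ℝ) : EReal) else ⊤)
    (p : Fin N → ℝ) (hp : ∀ i, 0 < p i) :
    IsUniqMinOn (fun r => ((KLvec r p : ℝ) : EReal) + (σ : EReal) * f r)
      {r : Fin N → ℝ | ∀ i, 0 ≤ r i}
      (fun i => min (p i * Real.exp (-σ * w i)) κ) := by
  have hin : ∀ r : Fin N → ℝ, (∀ i, 0 ≤ r i ∧ r i ≤ κ) →
      ((KLvec r p : ℝ) : EReal) + (σ : EReal) * f r =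
      ((∑ i, ((r i * Real.log (r i / p i) - r i + p i) + (σ * w i) * r i) : ℝ) : EReal) := by
    intro r hr
    rw [hf]
    simp only [if_pos hr]
    rw [← EReal.coe_mul, ← EReal.coe_add, KLvec, Finset.mul_sum, ← Finset.sum_add_distrib]
    simp only [mul_assoc]
  have hout : ∀ r : Fin N → ℝ, (¬ ∀ i, 0 ≤ r i ∧ r i ≤ κ) →
      ((KLvec r p : ℝ) : EReal) + (σ : EReal) * f r = ⊤ := by
    intro r hr
    rw [hf]
    simp only [if_neg hr]
    rw [EReal.coe_mul_top_of_pos hσ, EReal.coe_add_top]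
  have hx : ∀ i, 0 ≤ min (p i * Real.exp (-σ * w i)) κ ∧
      min (p i * Real.exp (-σ * w i)) κ ≤ κ := fun i =>
    ⟨le_min (mul_nonneg (hp i).le (Real.exp_pos _).le) hκ.le, min_le_right _ _⟩
  have hlt : ∀ y : Fin N → ℝ, y ≠ (fun i => min (p i * Real.exp (-σ * w i)) κ) →
      ((KLvec (fun i => min (p i * Real.exp (-σ * w i)) κ) p : ℝ) : EReal)
        + (σ : EReal) * f (fun i => min (p i * Real.exp (-σ * w i)) κ) <
      ((KLvec y p : ℝ) : EReal) + (σ : EReal) * f y := by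
    intro y hne
    rw [hin _ hx]
    by_cases hy : ∀ i, 0 ≤ y i ∧ y i ≤ κ
    · rw [hin _ hy, EReal.coe_lt_coe_iff]
      obtain ⟨j, hj⟩ := Function.ne_iff.mp hne
      have hs : ∀ i, y i ≠ min (p i * Real.exp (-σ * w i)) κ → _ := fun i hi =>
        scalar_lt (σ * w i) κ (p i) (y i) hκ (hp i) (hy i).1 (hy i).2
          (by rw [← neg_mul]; exact hi)
      simp only [← neg_mul] at hs
      apply Finset.sum_lt_sum
      · intro i _
        by_cases hi : y i = min (p i * Real.exp (-σ * w i)) κ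
        · simp only [← hi]; exact le_rfl
        · exact (hs i hi).le
      · exact ⟨j, Finset.mem_univ _, hs j hj⟩
    · rw [hout _ hy]
      exact EReal.coe_lt_top _
  refine ⟨fun i => (hx i).1, ?_, ?_⟩
  · intro y _
    by_cases h : y = (fun i => min (p i * Real.exp (-σ * w i)) κ)
    · rw [h]
    · exact (hlt y h).le
  · intro y _ hmin
    by_contra h
    exact absurd (hmin _ (fun i => (hx i).1)) (not_le_of_gt (hlt y h))
end
end

section
/- (Linear-shift rule for weighted KL proximal operators.) Let M, N ≥ 1, λ ∈ ℝ^M with λ_m > 0, let h : (ℝ^N)^M → ℝ ∪ {+∞} be proper, lower semicontinuous and convex, and let w_1, …, w_M ∈ ℝ^N. Define f(p_1, …, p_M) = h(p_1, …, p_M) + Σ_{m=1}^M ⟨w_m, p_m⟩. Then for all strictly positive p_1, …, p_M ∈ ℝ^N, Prox^{KL_λ}_f(p_1, …, p_M) = Prox^{KL_λ}_h(p_1 ⊙ e^{−w_1/λ_1}, …, p_M ⊙ e^{−w_M/λ_M}), whenever the right-hand side proximal problem has a unique minimizer (in which case so does the left). -/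
open scoped BigOperators

noncomputable section

/-- Weighted KL divergence between `M`-tuples of vectors. -/
def KLlam {M N : ℕ} (lam : Fin M → ℝ) (P Q : Fin M → Fin N → ℝ) : ℝ :=
  ∑ m, lam m * KLvec (P m) (Q m)

theorem KLlam_shift {M N : ℕ} (lam : Fin M → ℝ) (hlam : ∀ m, 0 < lam m)
    (w P : Fin M → Fin N → ℝ) (hP : ∀ m i, 0 < P m i)
    (Q : Fin M → Fin N → ℝ) (hQ : ∀ m i, 0 ≤ Q m i) :
    KLlam lam Q P + ∑ m, ∑ i, w m i * Q m i =
      KLlam lam Q (fun m i => P m i * Real.exp (-(w m i) / lam m)) +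
        ∑ m, ∑ i, lam m * (P m i - P m i * Real.exp (-(w m i) / lam m)) := by
  simp only [KLlam, KLvec, Finset.mul_sum, ← Finset.sum_add_distrib]
  refine Finset.sum_congr rfl fun m _ => Finset.sum_congr rfl fun i _ => ?_
  have hl := (hlam m).ne'
  rcases (hQ m i).eq_or_lt with h0 | h0
  · rw [← h0]; ring
  · rw [Real.log_div h0.ne' (hP m i).ne',
      Real.log_div h0.ne' (mul_pos (hP m i) (Real.exp_pos _)).ne',
      Real.log_mul (hP m i).ne' (Real.exp_pos _).ne', Real.log_exp]
    have e : lam m * (-(w m i) / lam m) = -(w m i) := by field_simp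
    linear_combination (Q m i) * e

/-- Linear-shift rule: for `f(p₁,…,p_M) = h(p₁,…,p_M) + Σ_m ⟨w_m, p_m⟩`,
`Prox^{KL_λ}_f(p₁,…,p_M) = Prox^{KL_λ}_h(p₁ ⊙ e^{-w₁/λ₁}, …, p_M ⊙ e^{-w_M/λ_M})`,
whenever the right-hand side proximal problem has a unique minimizer. -/
theorem KL_prox_linear_shift {M N : ℕ} (hM : 1 ≤ M) (hN : 1 ≤ N)
    (lam : Fin M → ℝ) (hlam : ∀ m, 0 < lam m)
    (h : (Fin M → Fin N → ℝ) → EReal) (hh : ProperLSCConvex h)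
    (w : Fin M → Fin N → ℝ)
    (P : Fin M → Fin N → ℝ) (hP : ∀ m i, 0 < P m i)
    (Ptil : Fin M → Fin N → ℝ)
    (hrhs : IsUniqMinOn
      (fun Q => ((KLlam lam Q
          (fun m i => P m i * Real.exp (-(w m i) / lam m)) : ℝ) : EReal) + h Q)
      {Q : Fin M → Fin N → ℝ | ∀ m i, 0 ≤ Q m i} Ptil) :
    IsUniqMinOn
      (fun Q => ((KLlam lam Q P : ℝ) : EReal) + h Q +
        ((∑ m, ∑ i, w m i * Q m i : ℝ) : EReal))
      {Q : Fin M → Fin N → ℝ | ∀ m i, 0 ≤ Q m i} Ptil := by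
  obtain ⟨h1, h2, h3⟩ := hrhs
  set c : ℝ := ∑ m, ∑ i, lam m * (P m i - P m i * Real.exp (-(w m i) / lam m)) with hc
  have key : ∀ Q : Fin M → Fin N → ℝ, (∀ m i, 0 ≤ Q m i) →
      ((KLlam lam Q P : ℝ) : EReal) + h Q + ((∑ m, ∑ i, w m i * Q m i : ℝ) : EReal) =
      ((KLlam lam Q (fun m i => P m i * Real.exp (-(w m i) / lam m)) : ℝ) : EReal) + h Q
        + (c : EReal) := by
    intro Q hQ
    rw [add_right_comm, add_right_comm _ (h Q), ← EReal.coe_add, ← EReal.coe_add,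
      KLlam_shift lam hlam w P hP Q hQ]
  have canc : ∀ a b : EReal, a + (c : EReal) ≤ b + (c : EReal) → a ≤ b := by
    intro a b hab
    have := add_le_add hab (le_refl ((-c : ℝ) : EReal))
    rwa [add_assoc, add_assoc, ← EReal.coe_add, add_neg_cancel, EReal.coe_zero, add_zero,
      add_zero] at this
  refine ⟨h1, fun y hy => ?_, fun y hy hmin => h3 y hy fun z hz => ?_⟩
  · dsimp only
    rw [key _ h1, key _ hy]
    exact add_le_add (h2 y hy) le_rfl
  · have := hmin z hz
    dsimp only at this
    rw [key _ hy, key _ hz] at this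
    exact canc _ _ this
end
end

section
/- (Equality-constraint rule for weighted KL proximal operators.) Let M, N ≥ 1, λ ∈ ℝ^M with λ_m > 0, set Λ = Σ_m λ_m and λ̃_m = λ_m/Λ. Let h : (ℝ^N)^M → ℝ ∪ {+∞} be proper, lower semicontinuous and convex, let D = {(p_1, …, p_M) : p_1 = p_2 = … = p_M}, and define f = ι_D + h and h̃(p) = h(p, …, p). Then for all strictly positive p_1, …, p_M ∈ ℝ^N, Prox^{KL_λ}_f(p_1, …, p_M) = (p, …, p) where p = Prox^{KL}_{(1/Λ) h̃}( p_1^{λ̃_1} ⊙ ⋯ ⊙ p_M^{λ̃_M} ) (entrywise powers and products), whenever the right-hand side proximal problem has a unique minimizer. -/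
open scoped BigOperators
open scoped Classical

noncomputable section

theorem aux_KL {M N : ℕ} (hM : 1 ≤ M)
    (lam : Fin M → ℝ) (hlam : ∀ m, 0 < lam m)
    (Lam : ℝ) (hLam : Lam = ∑ m, lam m)
    (P : Fin M → Fin N → ℝ) (hP : ∀ m i, 0 < P m i) : 0 < Lam ∧ ∃ C : ℝ,
    ∀ r : Fin N → ℝ, (∀ i, 0 ≤ r i) → KLlam lam (fun _ => r) P =
      Lam * KLvec r (fun i => ∏ m, P m i ^ (lam m / Lam)) + C := by
  haveI : Nonempty (Fin M) := ⟨⟨0, hM⟩⟩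
  have hL : 0 < Lam := by
    rw [hLam]; exact Finset.sum_pos (fun m _ => hlam m) Finset.univ_nonempty
  refine ⟨hL, ∑ i, (∑ m, lam m * P m i - Lam * ∏ m, P m i ^ (lam m / Lam)), ?_⟩
  intro r hr
  unfold KLlam KLvec
  simp_rw [Finset.mul_sum]
  rw [Finset.sum_comm, ← Finset.sum_add_distrib]
  refine Finset.sum_congr rfl fun i _ => ?_
  rcases (hr i).eq_or_lt with h0 | h0
  · simp [← h0]
  · have hg : 0 < ∏ m, P m i ^ (lam m / Lam) :=
      Finset.prod_pos fun m _ => Real.rpow_pos_of_pos (hP m i) _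
    have e1 : Lam * Real.log (∏ m, P m i ^ (lam m / Lam)) = ∑ m, lam m * Real.log (P m i) := by
      rw [Real.log_prod (fun m _ => (Real.rpow_pos_of_pos (hP m i) _).ne'), Finset.mul_sum]
      refine Finset.sum_congr rfl fun m _ => ?_
      rw [Real.log_rpow (hP m i)]
      field_simp
    rw [Real.log_div h0.ne' hg.ne']
    have e2 : ∀ m, lam m * (r i * Real.log (r i / P m i) - r i + P m i) =
        lam m * (r i * Real.log (r i) - r i) - r i * (lam m * Real.log (P m i))
          + lam m * P m i := by
      intro m
      rw [Real.log_div h0.ne' (hP m i).ne']; ring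
    simp_rw [e2]
    rw [Finset.sum_add_distrib, Finset.sum_sub_distrib, ← Finset.sum_mul, ← Finset.mul_sum,
      ← e1, ← hLam]
    ring

theorem aux_le (L : ℝ) (hL : 0 < L) (C a b : ℝ) (x y : EReal) (hx : x ≠ ⊥) (hy : y ≠ ⊥) :
    ((L * a + C : ℝ) : EReal) + x ≤ ((L * b + C : ℝ) : EReal) + y ↔
    (a : EReal) + ((1 / L : ℝ) : EReal) * x ≤ (b : EReal) + ((1 / L : ℝ) : EReal) * y := by
  have hL' : 0 < 1 / L := by positivity
  induction x with
  | bot => exact absurd rfl hx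
  | top =>
    induction y with
    | bot => exact absurd rfl hy
    | top => simp only [EReal.coe_mul_top_of_pos hL', EReal.coe_add_top, le_refl]
    | coe y =>
      rw [EReal.coe_mul_top_of_pos hL', EReal.coe_add_top, EReal.coe_add_top]
      norm_cast
      simp only [top_le_iff, EReal.coe_ne_top]
  | coe x =>
    induction y with
    | bot => exact absurd rfl hy
    | top =>
      rw [EReal.coe_mul_top_of_pos hL', EReal.coe_add_top, EReal.coe_add_top]
      simp only [le_top]
    | coe y =>
      norm_cast
      have e : ∀ u v : ℝ, L * u + C + v = L * (u + 1 / L * v) + C := by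
        intro u v; field_simp; ring
      rw [e, e, add_le_add_iff_right, mul_le_mul_iff_right₀ hL]

/-- Equality-constraint rule: for `f = ι_D + h` with
`D = {(p₁,…,p_M) : p₁ = ⋯ = p_M}`, one has `Prox^{KL_λ}_f(p₁,…,p_M) = (p,…,p)` where
`p = Prox^{KL}_{(1/Λ) h̃}(p₁^{λ̃₁} ⊙ ⋯ ⊙ p_M^{λ̃_M})`, `Λ = Σ_m λ_m`, `λ̃_m = λ_m/Λ`,
`h̃(p) = h(p,…,p)`, whenever the right-hand side proximal problem has a unique
minimizer. -/
theorem KL_prox_equality_constraint {M N : ℕ} (hM : 1 ≤ M) (hN : 1 ≤ N)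
    (lam : Fin M → ℝ) (hlam : ∀ m, 0 < lam m)
    (Lam : ℝ) (hLam : Lam = ∑ m, lam m)
    (h : (Fin M → Fin N → ℝ) → EReal) (hh : ProperLSCConvex h)
    (P : Fin M → Fin N → ℝ) (hP : ∀ m i, 0 < P m i)
    (p : Fin N → ℝ)
    (hrhs : IsUniqMinOn
      (fun r => ((KLvec r (fun i => ∏ m, P m i ^ (lam m / Lam)) : ℝ) : EReal) +
        ((1 / Lam : ℝ) : EReal) * h (fun _ => r))
      {r : Fin N → ℝ | ∀ i, 0 ≤ r i} p) :
    IsUniqMinOn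
      (fun Q => ((KLlam lam Q P : ℝ) : EReal) +
        ((if ∀ m m', Q m = Q m' then (0 : EReal) else ⊤) + h Q))
      {Q : Fin M → Fin N → ℝ | ∀ m i, 0 ≤ Q m i} (fun _ => p) := by
  obtain ⟨hL, C, hC⟩ := aux_KL hM lam hlam Lam hLam P hP
  obtain ⟨hpS, hmin, huniq⟩ := hrhs
  have hbot := hh.1
  have hL' : 0 < 1 / Lam := by positivity
  simp only [Set.mem_setOf_eq] at hpS hmin huniq
  have htop : h (fun _ => p) ≠ ⊤ := by
    intro ht
    have key : (fun i => p i + 1) = p := by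
      refine huniq _ (fun i => by linarith [hpS i]) fun z hz => ?_
      have h1 := hmin z hz
      rw [ht, EReal.coe_mul_top_of_pos hL', EReal.coe_add_top, top_le_iff] at h1
      rw [h1]; exact le_top
    have := congrFun key ⟨0, hN⟩
    simp at this
  refine ⟨fun _ i => hpS i, ?_, ?_⟩
  · intro Q hQ
    by_cases hD : ∀ m m', Q m = Q m'
    · obtain ⟨r, rfl⟩ : ∃ r, Q = fun _ => r := ⟨Q ⟨0, hM⟩, funext fun m => hD _ _⟩
      have hr : ∀ i, 0 ≤ r i := hQ ⟨0, hM⟩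
      simp only [implies_true, if_true, zero_add]
      rw [hC r hr, hC p hpS, aux_le Lam hL _ _ _ _ _ (hbot _) (hbot _)]
      exact hmin r hr
    · simp only [if_neg hD]
      rw [EReal.top_add_of_ne_bot (hbot _), EReal.coe_add_top]
      exact le_top
  · intro Q hQ hQmin
    have hD : ∀ m m', Q m = Q m' := by
      by_contra hD
      have h1 := hQmin (fun _ => p) (fun _ i => hpS i)
      simp only [if_neg hD, implies_true, if_true, zero_add] at h1
      rw [EReal.top_add_of_ne_bot (hbot _), EReal.coe_add_top, top_le_iff] at h1
      lift h (fun _ => p) to ℝ using ⟨htop, hbot _⟩ with t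
      exact EReal.coe_ne_top _ (by exact_mod_cast h1)
    obtain ⟨r, rfl⟩ : ∃ r, Q = fun _ => r := ⟨Q ⟨0, hM⟩, funext fun m => hD _ _⟩
    have hr : ∀ i, 0 ≤ r i := hQ ⟨0, hM⟩
    have : r = p := by
      refine huniq r hr fun z hz => ?_
      have h1 := hQmin (fun _ => z) (fun _ i => hz i)
      simp only [implies_true, if_true, zero_add] at h1
      rwa [hC r hr, hC z hz, aux_le Lam hL _ _ _ _ _ (hbot _) (hbot _)] at h1
    rw [this]
end
end

section
/- (Composition-with-sum rule for KL proximal operators.) Let M, N ≥ 1, let h : ℝ^N → ℝ ∪ {+∞} be proper, lower semicontinuous and convex, set λ = (1, …, 1) ∈ ℝ^M, and define f(p_1, …, p_M) = h(p_1 + ⋯ + p_M). Then for all strictly positive p_1, …, p_M ∈ ℝ^N, writing s = p_1 + ⋯ + p_M and r = Prox^{KL}_h(s) (assumed to exist uniquely), one has Prox^{KL_λ}_f(p_1, …, p_M) = ( (r ⊘ s) ⊙ p_1, …, (r ⊘ s) ⊙ p_M ). -/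
open scoped BigOperators

noncomputable section

def gKL (a b : ℝ) : ℝ := a * Real.log (a / b) - a + b

theorem gKL_eq {a b : ℝ} (hb : 0 < b) : gKL a b = b * InformationTheory.klFun (a / b) := by
  unfold gKL InformationTheory.klFun
  field_simp
  ring

theorem gKL_nonneg {a b : ℝ} (ha : 0 ≤ a) (hb : 0 ≤ b) (hab : b = 0 → a = 0) : 0 ≤ gKL a b := by
  rcases hb.eq_or_lt with h | h
  · have := hab h.symm
    subst this
    simp [gKL, ← h]
  · rw [gKL_eq h]
    exact mul_nonneg hb (InformationTheory.klFun_nonneg (by positivity))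

theorem gKL_eq_zero {a b : ℝ} (ha : 0 ≤ a) (hb : 0 ≤ b) (hab : b = 0 → a = 0)
    (h0 : gKL a b = 0) : a = b := by
  rcases hb.eq_or_lt with h | h
  · rw [hab h.symm, h]
  · rw [gKL_eq h] at h0
    have h1 := (mul_eq_zero.1 h0).resolve_left h.ne'
    rw [InformationTheory.klFun_eq_zero_iff (by positivity)] at h1
    field_simp at h1
    exact h1

theorem gKL_scale {a b c : ℝ} (hb : 0 < b) (hc : c = 0 → a = 0) :
    a * Real.log (a / b) = a * Real.log c + a * Real.log (a / (c * b)) := by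
  by_cases ha : a = 0
  · simp [ha]
  · have hc' : c ≠ 0 := fun h => ha (hc h)
    rw [← mul_add, ← Real.log_mul hc' (div_ne_zero ha (mul_ne_zero hc' hb.ne'))]
    congr 2
    field_simp

theorem KLlam_decomp {M N : ℕ} (P Q : Fin M → Fin N → ℝ) (hP : ∀ m i, 0 < P m i)
    (hs : ∀ i, 0 < ∑ m, P m i) (hQ : ∀ m i, 0 ≤ Q m i) :
    KLlam (fun _ => (1 : ℝ)) Q P = KLvec (fun i => ∑ m, Q m i) (fun i => ∑ m, P m i) +
      ∑ i, ∑ m, gKL (Q m i) ((∑ m', Q m' i) / (∑ m', P m' i) * P m i) := by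
  unfold KLlam KLvec
  simp only [one_mul]
  rw [Finset.sum_comm, ← Finset.sum_add_distrib]
  refine Finset.sum_congr rfl fun i _ => ?_
  set q := ∑ m', Q m' i with hq
  set s := ∑ m', P m' i with hs'
  have hsi : s ≠ 0 := (hs i).ne'
  have h0 : ∀ m, q / s = 0 → Q m i = 0 := by
    intro m h
    have h2 : q = 0 := by simpa [hsi] using h
    exact (Finset.sum_eq_zero_iff_of_nonneg (fun m _ => hQ m i)).1 h2 m (Finset.mem_univ _)
  have e : ∀ m, Q m i * Real.log (Q m i / P m i) - Q m i + P m i =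
      Q m i * Real.log (q / s) + gKL (Q m i) (q / s * P m i) + P m i - q / s * P m i := by
    intro m
    rw [gKL_scale (hP m i) (h0 m), gKL]
    ring
  rw [Finset.sum_congr rfl fun m _ => e m]
  rw [Finset.sum_sub_distrib, Finset.sum_add_distrib, Finset.sum_add_distrib,
    ← Finset.sum_mul, ← Finset.mul_sum, ← hq, ← hs', div_mul_cancel₀ _ hsi]
  ring

/-- Composition-with-sum rule: for `f(p₁,…,p_M) = h(p₁ + ⋯ + p_M)` and unit weights,
`Prox^{KL_λ}_f(p₁,…,p_M) = ((r ⊘ s) ⊙ p₁, …, (r ⊘ s) ⊙ p_M)` where `s = p₁ + ⋯ + p_M`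
and `r = Prox^{KL}_h(s)` (assumed to exist uniquely). -/
theorem KL_prox_sum_composition {M N : ℕ} (hM : 1 ≤ M) (hN : 1 ≤ N)
    (h : (Fin N → ℝ) → EReal) (hh : ProperLSCConvex h)
    (P : Fin M → Fin N → ℝ) (hP : ∀ m i, 0 < P m i)
    (r : Fin N → ℝ)
    (hr : IsUniqMinOn
      (fun x => ((KLvec x (fun i => ∑ m, P m i) : ℝ) : EReal) + h x)
      {x : Fin N → ℝ | ∀ i, 0 ≤ x i} r) :
    IsUniqMinOn
      (fun Q => ((KLlam (fun _ => (1 : ℝ)) Q P : ℝ) : EReal) +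
        h (fun i => ∑ m, Q m i))
      {Q : Fin M → Fin N → ℝ | ∀ m i, 0 ≤ Q m i}
      (fun m i => r i / (∑ m', P m' i) * P m i) := by
  obtain ⟨hr0, hrmin, hruniq⟩ := hr
  simp only [Set.mem_setOf_eq] at hr0 hrmin hruniq
  have hs : ∀ i, 0 < ∑ m, P m i := fun i =>
    Finset.sum_pos (fun m _ => hP m i) ⟨⟨0, hM⟩, Finset.mem_univ _⟩
  have hrtop : h r ≠ ⊤ := by
    intro ht
    rw [ht] at hrmin
    simp only [EReal.coe_add_top, top_le_iff] at hrmin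
    have h0 := hruniq (fun _ => 0) (fun _ => le_rfl)
      (fun z hz => by rw [hrmin z hz]; exact le_top)
    have h1 := hruniq (fun _ => 1) (fun _ => zero_le_one)
      (fun z hz => by rw [hrmin z hz]; exact le_top)
    have := congrFun (h0.trans h1.symm) ⟨0, hN⟩
    norm_num at this
  have hrbot := hh.1 r
  set R : Fin M → Fin N → ℝ := fun m i => r i / (∑ m', P m' i) * P m i with hR
  have hR0 : ∀ m i, 0 ≤ R m i := fun m i =>
    mul_nonneg (div_nonneg (hr0 i) (hs i).le) (hP m i).le
  have hRs : (fun i => ∑ m, R m i) = r := by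
    funext i
    simp only [hR]
    rw [← Finset.mul_sum, div_mul_cancel₀ _ (hs i).ne']
  have hside : ∀ Q : Fin M → Fin N → ℝ, (∀ m i, 0 ≤ Q m i) → ∀ m i,
      0 ≤ (∑ m', Q m' i) / (∑ m', P m' i) * P m i ∧
      ((∑ m', Q m' i) / (∑ m', P m' i) * P m i = 0 → Q m i = 0) := by
    intro Q hQ m i
    refine ⟨mul_nonneg (div_nonneg (Finset.sum_nonneg fun m _ => hQ m i) (hs i).le) (hP m i).le,
      fun h => ?_⟩
    have h2 : ∑ m', Q m' i = 0 := by simpa [(hs i).ne', (hP m i).ne'] using h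
    exact (Finset.sum_eq_zero_iff_of_nonneg (fun m _ => hQ m i)).1 h2 m (Finset.mem_univ _)
  have hg : ∀ Q : Fin M → Fin N → ℝ, (∀ m i, 0 ≤ Q m i) → ∀ i m,
      0 ≤ gKL (Q m i) ((∑ m', Q m' i) / (∑ m', P m' i) * P m i) := fun Q hQ i m =>
    gKL_nonneg (hQ m i) (hside Q hQ m i).1 (hside Q hQ m i).2
  have hFR : KLlam (fun _ => (1 : ℝ)) R P = KLvec r (fun i => ∑ m, P m i) := by
    rw [KLlam_decomp P R hP hs hR0, hRs]
    have : ∀ i m, gKL (R m i) ((∑ m', R m' i) / (∑ m', P m' i) * P m i) = 0 := by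
      intro i m
      rw [congrFun hRs i]
      change gKL (R m i) (R m i) = 0
      unfold gKL
      by_cases h : R m i = 0
      · simp [h]
      · simp [div_self h]
    simp [this]
  have hle : ∀ Q : Fin M → Fin N → ℝ, (∀ m i, 0 ≤ Q m i) →
      ((KLvec (fun i => ∑ m, Q m i) (fun i => ∑ m, P m i) : ℝ) : EReal) + h (fun i => ∑ m, Q m i)
      ≤ ((KLlam (fun _ => (1 : ℝ)) Q P : ℝ) : EReal) + h (fun i => ∑ m, Q m i) := by
    intro Q hQ
    refine add_le_add_left (EReal.coe_le_coe_iff.2 ?_) _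
    rw [KLlam_decomp P Q hP hs hQ]
    have := Finset.sum_nonneg fun i (_ : i ∈ Finset.univ) =>
      Finset.sum_nonneg fun m (_ : m ∈ Finset.univ) => hg Q hQ i m
    linarith
  have hsum0 : ∀ Q : Fin M → Fin N → ℝ, (∀ m i, 0 ≤ Q m i) → ∀ i, 0 ≤ ∑ m, Q m i :=
    fun Q hQ i => Finset.sum_nonneg fun m _ => hQ m i
  refine ⟨hR0, ?_, ?_⟩
  · intro Q hQ
    simp only [hRs, hFR]
    exact (hrmin _ (hsum0 Q hQ)).trans (hle Q hQ)
  · intro Q hQ hmin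
    have h1 := hmin R hR0
    simp only [hRs, hFR] at h1
    have hq : (fun i => ∑ m, Q m i) = r := hruniq _ (hsum0 Q hQ) fun z hz =>
      ((hle Q hQ).trans h1).trans (hrmin z hz)
    rw [hq] at h1
    lift h r to ℝ using ⟨hrtop, hrbot⟩ with t
    norm_cast at h1
    rw [KLlam_decomp P Q hP hs hQ, hq] at h1
    have h3 : ∑ i, ∑ m, gKL (Q m i) ((∑ m', Q m' i) / (∑ m', P m' i) * P m i) = 0 :=
      le_antisymm (by linarith) (Finset.sum_nonneg fun i _ => Finset.sum_nonneg fun m _ => hg Q hQ i m)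
    funext m i
    have h4 := (Finset.sum_eq_zero_iff_of_nonneg
      (fun i _ => Finset.sum_nonneg fun m _ => hg Q hQ i m)).1 h3 i (Finset.mem_univ _)
    have h5 := (Finset.sum_eq_zero_iff_of_nonneg (fun m _ => hg Q hQ i m)).1 h4 m (Finset.mem_univ _)
    have h6 := gKL_eq_zero (hQ m i) (hside Q hQ m i).1 (hside Q hQ m i).2 h5
    rw [h6, congrFun hq i]
end
end

section
/- (Lifting rule for KL proximal operators through row marginals.) Let M, N ≥ 1, λ ∈ ℝ^M with λ_m > 0, and let h : (ℝ^N)^M → ℝ ∪ {+∞} be proper, lower semicontinuous and convex. Define f(π_1, …, π_M) = h(π_1𝟙, …, π_M𝟙) on M-tuples of N×N matrices. Then for all matrices π_1, …, π_M with strictly positive entries, writing p_m = π_m𝟙 and (p̃_1, …, p̃_M) = Prox^{KL_λ}_h(p_1, …, p_M) (assumed to exist uniquely with strictly positive entries), one has Prox^{KL_λ}_f(π_1, …, π_M) = ( diag(p̃_1 ⊘ p_1) π_1, …, diag(p̃_M ⊘ p_M) π_M ). -/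
open scoped BigOperators

noncomputable section

/-- Weighted KL divergence between `M`-tuples of vectors. -/
def KLlamVec {M N : ℕ} (lam : Fin M → ℝ) (P Q : Fin M → Fin N → ℝ) : ℝ :=
  ∑ m, lam m * KLvec (P m) (Q m)

/-- Weighted KL divergence between `M`-tuples of matrices. -/
def KLlamMat {M N : ℕ} (lam : Fin M → ℝ)
    (Pi Xi : Fin M → Fin N → Fin N → ℝ) : ℝ :=
  ∑ m, lam m * KLmat (Pi m) (Xi m)

theorem klp_aux (s t : ℝ) (hs : 0 ≤ s) (ht : 0 ≤ t) (h0 : t = 0 → s = 0) :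
    0 ≤ s * Real.log (s / t) - s + t ∧ (s * Real.log (s / t) - s + t = 0 → s = t) := by
  rcases eq_or_lt_of_le ht with ht | ht
  · have := h0 ht.symm
    subst this
    simp [← ht]
  rcases eq_or_lt_of_le hs with hs | hs
  · rw [← hs]
    simp
    exact ⟨ht.le, fun h => h.symm⟩
  have hx : 0 < t / s := by positivity
  have e : Real.log (s / t) = - Real.log (t / s) := by
    rw [← Real.log_inv, inv_div]
  have e2 : s * Real.log (s / t) - s + t = s * (t / s - 1 - Real.log (t / s)) := by
    rw [e]; field_simp; ring
  rw [e2]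
  refine ⟨mul_nonneg hs.le (by linarith [Real.log_le_sub_one_of_pos hx]), fun h => ?_⟩
  by_contra hne
  have h1 : t / s ≠ 1 := by
    intro h1
    rw [div_eq_one_iff_eq hs.ne'] at h1
    exact hne h1.symm
  have := Real.log_lt_sub_one_of_pos hx h1
  rcases mul_eq_zero.1 h with h | h <;> linarith

theorem row_identity {N : ℕ} (s q : Fin N → ℝ) (hs : ∀ j, 0 ≤ s j) (hq : ∀ j, 0 < q j)
    (hp : 0 < ∑ k, q k) :
    ∑ j, (s j * Real.log (s j / q j) - s j + q j) =
      ((∑ k, s k) * Real.log ((∑ k, s k) / ∑ k, q k) - (∑ k, s k) + ∑ k, q k) +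
      ∑ j, (s j * Real.log (s j / ((∑ k, s k) / (∑ k, q k) * q j)) - s j
        + (∑ k, s k) / (∑ k, q k) * q j) := by
  have key : ∀ j, s j * Real.log (s j / q j) = s j * Real.log ((∑ k, s k) / ∑ k, q k) +
      s j * Real.log (s j / ((∑ k, s k) / (∑ k, q k) * q j)) := by
    intro j
    rcases eq_or_lt_of_le (hs j) with h | h
    · simp [← h]
    · have hr : 0 < ∑ k, s k :=
        lt_of_lt_of_le h (Finset.single_le_sum (fun k _ => hs k) (Finset.mem_univ j))
      have hqj := hq j
      rw [← mul_add, ← Real.log_mul (by positivity) (by positivity)]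
      congr 2
      field_simp
  have e : (∑ k, s k) / (∑ k, q k) * (∑ k, q k) = ∑ k, s k := by field_simp
  simp only [Finset.sum_add_distrib, Finset.sum_sub_distrib, key, ← Finset.sum_mul,
    ← Finset.mul_sum]
  rw [e]; ring

theorem row_ineq {N : ℕ} (s q : Fin N → ℝ) (hs : ∀ j, 0 ≤ s j) (hq : ∀ j, 0 < q j)
    (hp : 0 < ∑ k, q k) :
    ((∑ k, s k) * Real.log ((∑ k, s k) / ∑ k, q k) - (∑ k, s k) + ∑ k, q k) ≤
      ∑ j, (s j * Real.log (s j / q j) - s j + q j) ∧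
    (((∑ k, s k) * Real.log ((∑ k, s k) / ∑ k, q k) - (∑ k, s k) + ∑ k, q k) =
      ∑ j, (s j * Real.log (s j / q j) - s j + q j) →
      ∀ j, s j = (∑ k, s k) / (∑ k, q k) * q j) := by
  have hr : 0 ≤ ∑ k, s k := Finset.sum_nonneg fun k _ => hs k
  have A : ∀ j, _ := fun j => klp_aux (s j) ((∑ k, s k) / (∑ k, q k) * q j) (hs j)
    (mul_nonneg (div_nonneg hr hp.le) (hq j).le) (by
      intro h
      have h1 : ∑ k, s k = 0 := by
        rcases mul_eq_zero.1 h with h | h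
        · rcases div_eq_zero_iff.1 h with h | h
          · exact h
          · exact absurd h hp.ne'
        · exact absurd h (hq j).ne'
      exact (Finset.sum_eq_zero_iff_of_nonneg (fun k _ => hs k)).1 h1 j (Finset.mem_univ j))
  have B := Finset.sum_nonneg (s := Finset.univ) fun j _ => (A j).1
  rw [row_identity s q hs hq hp]
  refine ⟨by linarith, fun h j => (A j).2 ?_⟩
  exact (Finset.sum_eq_zero_iff_of_nonneg (fun k _ => (A k).1)).1 (by linarith) j
    (Finset.mem_univ j)

theorem lam_ineq {M N : ℕ} (hN : 1 ≤ N) (lam : Fin M → ℝ) (hlam : ∀ m, 0 < lam m)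
    (Pi : Fin M → Fin N → Fin N → ℝ) (hPi : ∀ m i j, 0 < Pi m i j)
    (S : Fin M → Fin N → Fin N → ℝ) (hS : ∀ m i j, 0 ≤ S m i j) :
    KLlamVec lam (fun m i => ∑ j, S m i j) (fun m i => ∑ j, Pi m i j) ≤ KLlamMat lam S Pi ∧
    (KLlamMat lam S Pi ≤ KLlamVec lam (fun m i => ∑ j, S m i j) (fun m i => ∑ j, Pi m i j) →
      ∀ m i j, S m i j = (∑ k, S m i k) / (∑ k, Pi m i k) * Pi m i j) := by
  have hp : ∀ m i, 0 < ∑ k, Pi m i k := fun m i =>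
    Finset.sum_pos (fun k _ => hPi m i k) ⟨⟨0, hN⟩, Finset.mem_univ _⟩
  have R : ∀ m i, _ := fun m i => row_ineq (S m i) (Pi m i) (hS m i) (hPi m i) (hp m i)
  have V : ∀ m, KLvec (fun i => ∑ j, S m i j) (fun i => ∑ j, Pi m i j) ≤ KLmat (S m) (Pi m) :=
    fun m => Finset.sum_le_sum fun i _ => (R m i).1
  have W : ∀ m ∈ (Finset.univ : Finset (Fin M)),
      lam m * KLvec (fun i => ∑ j, S m i j) (fun i => ∑ j, Pi m i j)
        ≤ lam m * KLmat (S m) (Pi m) :=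
    fun m _ => mul_le_mul_of_nonneg_left (V m) (hlam m).le
  refine ⟨Finset.sum_le_sum W, fun h m i => (R m i).2 ?_⟩
  have h1 := (Finset.sum_eq_sum_iff_of_le W).1 (le_antisymm (Finset.sum_le_sum W) h) m
    (Finset.mem_univ m)
  have h2 := mul_left_cancel₀ (hlam m).ne' h1
  exact (Finset.sum_eq_sum_iff_of_le fun i _ => (R m i).1).1 h2 i (Finset.mem_univ i)

theorem lam_eq {M N : ℕ} (hN : 1 ≤ N) (lam : Fin M → ℝ)
    (Pi : Fin M → Fin N → Fin N → ℝ) (hPi : ∀ m i j, 0 < Pi m i j)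
    (P : Fin M → Fin N → ℝ) (hP : ∀ m i, 0 < P m i) :
    (∀ m i, ∑ j, P m i / (∑ k, Pi m i k) * Pi m i j = P m i) ∧
    KLlamMat lam (fun m i j => P m i / (∑ k, Pi m i k) * Pi m i j) Pi =
      KLlamVec lam P (fun m i => ∑ j, Pi m i j) := by
  have hp : ∀ m i, 0 < ∑ k, Pi m i k := fun m i =>
    Finset.sum_pos (fun k _ => hPi m i k) ⟨⟨0, hN⟩, Finset.mem_univ _⟩
  have E : ∀ m i, ∑ j, P m i / (∑ k, Pi m i k) * Pi m i j = P m i := fun m i => by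
    rw [← Finset.mul_sum]
    have := hp m i
    field_simp
  refine ⟨E, Finset.sum_congr rfl fun m _ => congrArg _ (Finset.sum_congr rfl fun i _ => ?_)⟩
  have h1 : ∀ j, P m i / (∑ k, Pi m i k) * Pi m i j / Pi m i j = P m i / ∑ k, Pi m i k :=
    fun j => mul_div_cancel_right₀ _ (hPi m i j).ne'
  simp only [h1, Finset.sum_add_distrib, Finset.sum_sub_distrib, ← Finset.sum_mul, E]

/-- Lifting rule through row marginals: for `f(π₁,…,π_M) = h(π₁𝟙,…,π_M𝟙)`,
`Prox^{KL_λ}_f(π₁,…,π_M) = (diag(p̃₁ ⊘ p₁) π₁, …, diag(p̃_M ⊘ p_M) π_M)` where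
`p_m = π_m𝟙` and `(p̃₁,…,p̃_M) = Prox^{KL_λ}_h(p₁,…,p_M)` (assumed to exist uniquely,
with strictly positive entries). -/
theorem KL_prox_lifting_rows {M N : ℕ} (hM : 1 ≤ M) (hN : 1 ≤ N)
    (lam : Fin M → ℝ) (hlam : ∀ m, 0 < lam m)
    (h : (Fin M → Fin N → ℝ) → EReal) (hh : ProperLSCConvex h)
    (Pi : Fin M → Fin N → Fin N → ℝ) (hPi : ∀ m i j, 0 < Pi m i j)
    (Ptil : Fin M → Fin N → ℝ) (hPtilpos : ∀ m i, 0 < Ptil m i)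
    (hvec : IsUniqMinOn
      (fun R => ((KLlamVec lam R (fun m i => ∑ j, Pi m i j) : ℝ) : EReal) + h R)
      {R : Fin M → Fin N → ℝ | ∀ m i, 0 ≤ R m i} Ptil) :
    IsUniqMinOn
      (fun Sig => ((KLlamMat lam Sig Pi : ℝ) : EReal) +
        h (fun m i => ∑ j, Sig m i j))
      {Sig : Fin M → Fin N → Fin N → ℝ | ∀ m i j, 0 ≤ Sig m i j}
      (fun m i j => Ptil m i / (∑ k, Pi m i k) * Pi m i j) := by
  obtain ⟨hmem, hmin, huniq⟩ := hvec
  obtain ⟨hE, hK⟩ := lam_eq hN lam Pi hPi Ptil hPtilpos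
  have hp : ∀ m i, 0 < ∑ k, Pi m i k := fun m i =>
    Finset.sum_pos (fun k _ => hPi m i k) ⟨⟨0, hN⟩, Finset.mem_univ _⟩
  have htop : h Ptil ≠ ⊤ := by
    intro ht
    have hz := huniq (fun m i => Ptil m i + 1)
      (fun m i => by have := hPtilpos m i; positivity) (by
        intro z hz
        have h1 := hmin z hz
        simp only [ht, EReal.coe_add_top, top_le_iff] at h1
        simp only [h1, le_top])
    have := congrFun (congrFun hz ⟨0, hM⟩) ⟨0, hN⟩
    simp at this
  have hbot := hh.1 Ptil
  have hval : ((KLlamMat lam (fun m i j => Ptil m i / (∑ k, Pi m i k) * Pi m i j) Pi : ℝ) : EReal)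
      + h (fun m i => ∑ j, Ptil m i / (∑ k, Pi m i k) * Pi m i j)
      = ((KLlamVec lam Ptil (fun m i => ∑ j, Pi m i j) : ℝ) : EReal) + h Ptil := by
    rw [hK]
    simp only [hE]
  have hlow : ∀ S : Fin M → Fin N → Fin N → ℝ, (∀ m i j, 0 ≤ S m i j) →
      ((KLlamVec lam (fun m i => ∑ j, S m i j) (fun m i => ∑ j, Pi m i j) : ℝ) : EReal)
        + h (fun m i => ∑ j, S m i j)
      ≤ ((KLlamMat lam S Pi : ℝ) : EReal) + h (fun m i => ∑ j, S m i j) := fun S hS =>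
    add_le_add_left (EReal.coe_le_coe_iff.2 (lam_ineq hN lam hlam Pi hPi S hS).1) _
  have hT : ∀ m i j, 0 ≤ Ptil m i / (∑ k, Pi m i k) * Pi m i j := fun m i j =>
    mul_nonneg (div_nonneg (hPtilpos m i).le (hp m i).le) (hPi m i j).le
  refine ⟨hT, fun S hS => ?_, fun S hS hSmin => ?_⟩
  · refine hval.le.trans ((hmin _ ?_).trans (hlow S hS))
    exact fun m i => Finset.sum_nonneg fun j _ => hS m i j
  · have h1 := (hSmin _ hT).trans hval.le
    have hR : (fun m i => ∑ j, S m i j) = Ptil :=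
      huniq _ (fun m i => Finset.sum_nonneg fun j _ => hS m i j)
        (fun z hz => ((hlow S hS).trans h1).trans (hmin z hz))
    have h2 : KLlamMat lam S Pi ≤
        KLlamVec lam (fun m i => ∑ j, S m i j) (fun m i => ∑ j, Pi m i j) := by
      rw [hR]
      simp only [hR] at h1
      lift h Ptil to ℝ using ⟨htop, hbot⟩ with c
      have h3 := (EReal.coe_le_coe_iff.1 (by simpa only [EReal.coe_add] using h1) :
        KLlamMat lam S Pi + c ≤ KLlamVec lam Ptil (fun m i => ∑ j, Pi m i j) + c)
      linarith
    have h3 := (lam_ineq hN lam hlam Pi hPi S hS).2 h2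
    funext m i j
    rw [h3 m i j]
    have := congrFun (congrFun hR m) i
    rw [this]
end
end

section
/- (Lifting rule for KL proximal operators through column marginals.) Let M, N ≥ 1, λ ∈ ℝ^M with λ_m > 0, and let h : (ℝ^N)^M → ℝ ∪ {+∞} be proper, lower semicontinuous and convex. Define f(π_1, …, π_M) = h(π_1^T𝟙, …, π_M^T𝟙) on M-tuples of N×N matrices. Then for all matrices π_1, …, π_M with strictly positive entries, writing p_m = π_m^T𝟙 and (p̃_1, …, p̃_M) = Prox^{KL_λ}_h(p_1, …, p_M) (assumed to exist uniquely with strictly positive entries), one has Prox^{KL_λ}_f(π_1, …, π_M) = ( π_1 diag(p̃_1 ⊘ p_1), …, π_M diag(p̃_M ⊘ p_M) ). -/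
open scoped BigOperators

noncomputable section

def klt (x y : ℝ) : ℝ := x * Real.log (x / y) - x + y

lemma klt_pos {x y : ℝ} (hx : 0 ≤ x) (hy : 0 ≤ y) (hxy : y = 0 → x = 0) (hne : x ≠ y) :
    0 < klt x y := by
  unfold klt
  rcases hx.eq_or_lt with h0 | h0
  · subst h0
    have : 0 < y := lt_of_le_of_ne hy hne
    simpa using this
  · have hy' : 0 < y := lt_of_le_of_ne hy (fun e => by have := hxy e.symm; linarith)
    have h1 : Real.log (y / x) < y / x - 1 := by
      apply Real.log_lt_sub_one_of_pos (by positivity)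
      intro e
      rw [div_eq_one_iff_eq h0.ne'] at e
      exact hne e.symm
    have h2 : Real.log (x / y) = - Real.log (y / x) := by
      rw [← Real.log_inv, inv_div]
    have h3 := mul_lt_mul_of_pos_left h1 h0
    have h4 : x * (y / x - 1) = y - x := by field_simp
    rw [h2]
    linarith

lemma klt_self (x : ℝ) : klt x x = 0 := by
  unfold klt
  by_cases h : x = 0
  · simp [h]
  · simp [div_self h]

lemma klt_nonneg {x y : ℝ} (hx : 0 ≤ x) (hy : 0 ≤ y) (hxy : y = 0 → x = 0) :
    0 ≤ klt x y := by
  by_cases h : x = y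
  · rw [h, klt_self]
  · exact (klt_pos hx hy hxy h).le

lemma klt_chain {N : ℕ} (hN : 1 ≤ N) (s q : Fin N → ℝ) (hs : ∀ i, 0 ≤ s i)
    (hq : ∀ i, 0 < q i) :
    ∑ i, klt (s i) (q i) =
      klt (∑ i, s i) (∑ i, q i) + ∑ i, klt (s i) (q i * ((∑ i, s i) / ∑ i, q i)) := by
  have : Nonempty (Fin N) := ⟨⟨0, hN⟩⟩
  have hQ : 0 < ∑ i, q i := Finset.sum_pos (fun i _ => hq i) Finset.univ_nonempty
  set Q := ∑ i, q i with hQd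
  set S := ∑ i, s i with hSd
  have key : ∀ i, klt (s i) (q i) = klt (s i) (q i * (S / Q)) +
      (s i * Real.log (S / Q) - q i * (S / Q) + q i) := by
    intro i
    unfold klt
    rcases (hs i).eq_or_lt with h0 | h0
    · rw [← h0]; simp
    · have hS : 0 < S := lt_of_lt_of_le h0
        (Finset.single_le_sum (fun j _ => hs j) (Finset.mem_univ i))
      have e : s i / (q i * (S / Q)) = (s i / q i) / (S / Q) := by rw [div_div]
      have := hq i
      rw [e, Real.log_div (x := s i / q i) (by positivity) (by positivity)]
      ring
  rw [Finset.sum_congr rfl (fun i _ => key i)]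
  simp only [Finset.sum_add_distrib, Finset.sum_sub_distrib, ← Finset.sum_mul]
  rw [← hQd, ← hSd]
  unfold klt
  have : Q * (S / Q) = S := by field_simp
  rw [this]
  ring

/-- Lifting rule through column marginals: for `f(π₁,…,π_M) = h(π₁ᵀ𝟙,…,π_Mᵀ𝟙)`,
`Prox^{KL_λ}_f(π₁,…,π_M) = (π₁ diag(p̃₁ ⊘ p₁), …, π_M diag(p̃_M ⊘ p_M))` where
`p_m = π_mᵀ𝟙` and `(p̃₁,…,p̃_M) = Prox^{KL_λ}_h(p₁,…,p_M)` (assumed to exist uniquely,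
with strictly positive entries). -/
theorem KL_prox_lifting_cols {M N : ℕ} (hM : 1 ≤ M) (hN : 1 ≤ N)
    (lam : Fin M → ℝ) (hlam : ∀ m, 0 < lam m)
    (h : (Fin M → Fin N → ℝ) → EReal) (hh : ProperLSCConvex h)
    (Pi : Fin M → Fin N → Fin N → ℝ) (hPi : ∀ m i j, 0 < Pi m i j)
    (Ptil : Fin M → Fin N → ℝ) (hPtilpos : ∀ m i, 0 < Ptil m i)
    (hvec : IsUniqMinOn
      (fun R => ((KLlamVec lam R (fun m j => ∑ i, Pi m i j) : ℝ) : EReal) + h R)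
      {R : Fin M → Fin N → ℝ | ∀ m i, 0 ≤ R m i} Ptil) :
    IsUniqMinOn
      (fun Sig => ((KLlamMat lam Sig Pi : ℝ) : EReal) +
        h (fun m j => ∑ i, Sig m i j))
      {Sig : Fin M → Fin N → Fin N → ℝ | ∀ m i j, 0 ≤ Sig m i j}
      (fun m i j => Pi m i j * (Ptil m j / ∑ k, Pi m k j)) := by
  classical
  have hne : Nonempty (Fin N) := ⟨⟨0, hN⟩⟩
  have hQ : ∀ m j, 0 < ∑ k, Pi m k j := fun m j =>
    Finset.sum_pos (fun i _ => hPi m i j) Finset.univ_nonempty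
  obtain ⟨hbot, -, -, -⟩ := hh
  obtain ⟨-, hmin, huniq⟩ := hvec
  set p : Fin M → Fin N → ℝ := fun m j => ∑ i, Pi m i j with hp
  -- finiteness at the minimizer
  have hfin : h Ptil ≠ ⊤ := by
    intro htop
    have h0 := huniq 0 (fun m i => le_rfl) (by
      intro z hz
      have h1 := hmin z hz
      simp only [htop, EReal.coe_add_top, top_le_iff] at h1
      simp only [h1, le_top])
    have := hPtilpos ⟨0, hM⟩ ⟨0, hN⟩
    rw [← h0] at this
    simp at this
  let G : (Fin M → Fin N → Fin N → ℝ) → ℝ := fun S =>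
    ∑ m, lam m * ∑ j, ∑ i, klt (S m i j) (Pi m i j * ((∑ k, S m k j) / ∑ k, Pi m k j))
  have hchain : ∀ S : Fin M → Fin N → Fin N → ℝ, (∀ m i j, 0 ≤ S m i j) →
      KLlamMat lam S Pi = KLlamVec lam (fun m j => ∑ i, S m i j) p + G S := by
    intro S hS
    simp only [KLlamMat, KLlamVec, G, ← Finset.sum_add_distrib, ← mul_add]
    refine Finset.sum_congr rfl fun m _ => ?_
    congr 1
    simp only [KLmat, KLvec, ← Finset.sum_add_distrib]
    rw [Finset.sum_comm]
    exact Finset.sum_congr rfl fun j _ =>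
      klt_chain hN (fun i => S m i j) (fun i => Pi m i j) (fun i => hS m i j)
        (fun i => hPi m i j)
  have ht0 : ∀ S : Fin M → Fin N → Fin N → ℝ, (∀ m i j, 0 ≤ S m i j) → ∀ m i j,
      0 ≤ Pi m i j * ((∑ k, S m k j) / ∑ k, Pi m k j) := by
    intro S hS m i j
    exact mul_nonneg (hPi m i j).le
      (div_nonneg (Finset.sum_nonneg fun k _ => hS m k j) (hQ m j).le)
  have ht1 : ∀ S : Fin M → Fin N → Fin N → ℝ, (∀ m i j, 0 ≤ S m i j) → ∀ m i j,
      Pi m i j * ((∑ k, S m k j) / ∑ k, Pi m k j) = 0 → S m i j = 0 := by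
    intro S hS m i j he
    have h1 : ∑ k, S m k j = 0 := by
      rcases mul_eq_zero.1 he with h | h
      · exact absurd h (hPi m i j).ne'
      · exact (div_eq_zero_iff.1 h).resolve_right (hQ m j).ne'
    exact (Finset.sum_eq_zero_iff_of_nonneg (fun k _ => hS m k j)).1 h1 i (Finset.mem_univ i)
  have hnn : ∀ S : Fin M → Fin N → Fin N → ℝ, (∀ m i j, 0 ≤ S m i j) → ∀ m i j,
      0 ≤ klt (S m i j) (Pi m i j * ((∑ k, S m k j) / ∑ k, Pi m k j)) :=
    fun S hS m i j => klt_nonneg (hS m i j) (ht0 S hS m i j) (ht1 S hS m i j)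
  have hG : ∀ S : Fin M → Fin N → Fin N → ℝ, (∀ m i j, 0 ≤ S m i j) → 0 ≤ G S := by
    intro S hS
    exact Finset.sum_nonneg fun m _ => mul_nonneg (hlam m).le
      (Finset.sum_nonneg fun j _ => Finset.sum_nonneg fun i _ => hnn S hS m i j)
  have hG0 : ∀ S : Fin M → Fin N → Fin N → ℝ, (∀ m i j, 0 ≤ S m i j) → G S = 0 →
      ∀ m i j, S m i j = Pi m i j * ((∑ k, S m k j) / ∑ k, Pi m k j) := by
    intro S hS he m i j
    have h1 := (Finset.sum_eq_zero_iff_of_nonneg (fun m _ => mul_nonneg (hlam m).le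
      (Finset.sum_nonneg fun j _ => Finset.sum_nonneg fun i _ => hnn S hS m i j))).1 he m
      (Finset.mem_univ m)
    have h2 := (mul_eq_zero.1 h1).resolve_left (hlam m).ne'
    have h3 := (Finset.sum_eq_zero_iff_of_nonneg
      (fun j _ => Finset.sum_nonneg fun i _ => hnn S hS m i j)).1 h2 j (Finset.mem_univ j)
    have h4 := (Finset.sum_eq_zero_iff_of_nonneg
      (fun i _ => hnn S hS m i j)).1 h3 i (Finset.mem_univ i)
    by_contra hcon
    exact (klt_pos (hS m i j) (ht0 S hS m i j) (ht1 S hS m i j) hcon).ne' h4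
  set T : Fin M → Fin N → Fin N → ℝ :=
    fun m i j => Pi m i j * (Ptil m j / ∑ k, Pi m k j) with hT
  have hTnn : ∀ m i j, 0 ≤ T m i j := fun m i j =>
    mul_nonneg (hPi m i j).le (div_nonneg (hPtilpos m j).le (hQ m j).le)
  have hTs : (fun m j => ∑ i, T m i j) = Ptil := by
    funext m j
    simp only [hT, ← Finset.sum_mul]
    have := (hQ m j).ne'
    field_simp
  have hGT : G T = 0 := by
    refine Finset.sum_eq_zero fun m _ => ?_
    refine mul_eq_zero_of_right _ (Finset.sum_eq_zero fun j _ => Finset.sum_eq_zero fun i _ => ?_)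
    have : ∑ k, T m k j = Ptil m j := congrFun (congrFun hTs m) j
    rw [this]
    exact klt_self _
  have hFT : ((KLlamMat lam T Pi : ℝ) : EReal) + h (fun m j => ∑ i, T m i j) =
      ((KLlamVec lam Ptil p : ℝ) : EReal) + h Ptil := by
    rw [hchain T hTnn, hGT, hTs, add_zero]
  have hle : ∀ S : Fin M → Fin N → Fin N → ℝ, (∀ m i j, 0 ≤ S m i j) →
      ((KLlamVec lam (fun m j => ∑ i, S m i j) p : ℝ) : EReal) + h (fun m j => ∑ i, S m i j) ≤
      ((KLlamMat lam S Pi : ℝ) : EReal) + h (fun m j => ∑ i, S m i j) := by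
    intro S hS
    have := hG S hS
    refine add_le_add_left (EReal.coe_le_coe_iff.2 ?_) _
    rw [hchain S hS]; linarith
  have hSn : ∀ S : Fin M → Fin N → Fin N → ℝ, (∀ m i j, 0 ≤ S m i j) →
      ∀ m j, 0 ≤ (fun m j => ∑ i, S m i j : Fin M → Fin N → ℝ) m j :=
    fun S hS m j => Finset.sum_nonneg fun i _ => hS m i j
  refine ⟨hTnn, ?_, ?_⟩
  · intro S hS
    show ((KLlamMat lam T Pi : ℝ) : EReal) + h (fun m j => ∑ i, T m i j) ≤ _
    rw [hFT]
    exact (hmin _ (hSn S hS)).trans (hle S hS)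
  · intro S hS hSmin
    have h1 : ((KLlamMat lam S Pi : ℝ) : EReal) + h (fun m j => ∑ i, S m i j) ≤
        ((KLlamVec lam Ptil p : ℝ) : EReal) + h Ptil := by
      rw [← hFT]; exact hSmin T hTnn
    have hR : (fun m j => ∑ i, S m i j) = Ptil := huniq _ (hSn S hS) fun z hz =>
      ((hle S hS).trans h1).trans (hmin z hz)
    rw [hR] at h1
    have hGS : G S = 0 := by
      refine le_antisymm ?_ (hG S hS)
      have hc := hchain S hS
      rw [hR] at hc
      lift h Ptil to ℝ using ⟨hfin, hbot _⟩ with c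
      have h2 : KLlamMat lam S Pi + c ≤ KLlamVec lam Ptil p + c := by exact_mod_cast h1
      linarith
    funext m i j
    rw [hG0 S hS hGS m i j]
    have : ∑ k, S m k j = Ptil m j := congrFun (congrFun hR m) j
    rw [this]
end
end

section
/- Let N ≥ 1, τ > 0, let h : ℝ^N → ℝ ∪ {+∞} be proper, lower semicontinuous and convex, set λ = (1, τ), and define ψ_1(p_1, p_2) = ι_D(p_1, p_2) + h(p_1), where D = {(p_1,p_2) : p_1 = p_2}. Then for all strictly positive p_1, p_2 ∈ ℝ^N, Prox^{KL_λ}_{ψ_1}(p_1, p_2) = (p, p), where p = Prox^{KL}_{(1/(1+τ)) h}( p_1^{1/(1+τ)} ⊙ p_2^{τ/(1+τ)} ) (entrywise powers and product), whenever this last proximal problem has a unique minimizer. Moreover, for ψ_2(p_1,p_2) = ι_{\{(q,r)\}}(p_1,p_2) with fixed nonnegative q, r ∈ ℝ^N, one has Prox^{KL_λ}_{ψ_2}(p_1, p_2) = (q, r). -/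
open scoped BigOperators
open scoped Classical

noncomputable section

theorem KLvec_combo {N : ℕ} (τ : ℝ) (hτ : 0 < τ) (p₁ p₂ : Fin N → ℝ)
    (hp₁ : ∀ i, 0 < p₁ i) (hp₂ : ∀ i, 0 < p₂ i) :
    ∃ C : ℝ, ∀ x : Fin N → ℝ, KLvec x p₁ + τ * KLvec x p₂ =
      (1 + τ) * KLvec x (fun i => p₁ i ^ (1 / (1 + τ)) * p₂ i ^ (τ / (1 + τ))) + C := by
  refine ⟨∑ i, (p₁ i + τ * p₂ i - (1 + τ) * (p₁ i ^ (1 / (1 + τ)) * p₂ i ^ (τ / (1 + τ)))), ?_⟩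
  intro x
  unfold KLvec
  rw [Finset.mul_sum, Finset.mul_sum, ← Finset.sum_add_distrib, ← Finset.sum_add_distrib]
  refine Finset.sum_congr rfl fun i _ => ?_
  have h1 := hp₁ i
  have h2 := hp₂ i
  have a1 := Real.rpow_pos_of_pos h1 (1 / (1 + τ))
  have a2 := Real.rpow_pos_of_pos h2 (τ / (1 + τ))
  have ht : (1 + τ) ≠ 0 := by positivity
  rcases eq_or_ne (x i) 0 with hx | hx
  · simp only [hx]; ring
  · rw [Real.log_div hx h1.ne', Real.log_div hx h2.ne', Real.log_div hx (mul_pos a1 a2).ne',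
      Real.log_mul a1.ne' a2.ne', Real.log_rpow h1, Real.log_rpow h2]
    field_simp
    ring

theorem obj_le_iff (τ : ℝ) (hτ : 0 < τ) (A B K L C : ℝ) (hA : A = (1 + τ) * K + C)
    (hB : B = (1 + τ) * L + C) (u v : EReal) (hu : u ≠ ⊥) (hv : v ≠ ⊥) :
    (A : EReal) + (0 + u) ≤ (B : EReal) + (0 + v) ↔
      (K : EReal) + ((1 / (1 + τ) : ℝ) : EReal) * u ≤
        (L : EReal) + ((1 / (1 + τ) : ℝ) : EReal) * v := by
  have hc : (0 : ℝ) < 1 / (1 + τ) := by positivity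
  have ht : (0 : ℝ) < 1 + τ := by positivity
  rw [zero_add, zero_add]
  induction u with
  | bot => exact absurd rfl hu
  | top =>
    induction v with
    | bot => exact absurd rfl hv
    | top => simp only [EReal.coe_mul_top_of_pos hc, EReal.coe_add_top, le_top]
    | coe v =>
      rw [EReal.coe_mul_top_of_pos hc, EReal.coe_add_top, EReal.coe_add_top, ← EReal.coe_mul,
        ← EReal.coe_add, ← EReal.coe_add]
      simp only [top_le_iff, EReal.coe_ne_top]
  | coe u =>
    induction v with
    | bot => exact absurd rfl hv
    | top => simp only [EReal.coe_mul_top_of_pos hc, EReal.coe_add_top, le_top]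
    | coe v =>
      rw [← EReal.coe_mul, ← EReal.coe_mul, ← EReal.coe_add, ← EReal.coe_add, ← EReal.coe_add,
        ← EReal.coe_add, EReal.coe_le_coe_iff, EReal.coe_le_coe_iff, hA, hB,
        ← mul_le_mul_iff_right₀ ht (b := K + 1 / (1 + τ) * u)]
      have e : ∀ k w : ℝ, (1 + τ) * (k + 1 / (1 + τ) * w) = (1 + τ) * k + w := by
        intro k w
        field_simp
      rw [e, e]
      constructor <;> intro h <;> linarith

/-- For `λ = (1,τ)` and `ψ₁(p₁,p₂) = ι_{p₁=p₂}(p₁,p₂) + h(p₁)`, one has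
`Prox^{KL_λ}_{ψ₁}(p₁,p₂) = (p,p)` with
`p = Prox^{KL}_{(1/(1+τ))h}(p₁^{1/(1+τ)} ⊙ p₂^{τ/(1+τ)})`, whenever this last proximal
problem has a unique minimizer; moreover for `ψ₂ = ι_{{(q,r)}}`,
`Prox^{KL_λ}_{ψ₂}(p₁,p₂) = (q,r)`. -/
theorem KL_prox_wasserstein_attraction {N : ℕ} (hN : 1 ≤ N)
    (τ : ℝ) (hτ : 0 < τ)
    (h : (Fin N → ℝ) → EReal) (hh : ProperLSCConvex h)
    (p₁ p₂ : Fin N → ℝ) (hp₁ : ∀ i, 0 < p₁ i) (hp₂ : ∀ i, 0 < p₂ i)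
    (p : Fin N → ℝ)
    (hrhs : IsUniqMinOn
      (fun r => ((KLvec r
          (fun i => p₁ i ^ (1 / (1 + τ)) * p₂ i ^ (τ / (1 + τ))) : ℝ) : EReal) +
        ((1 / (1 + τ) : ℝ) : EReal) * h r)
      {r : Fin N → ℝ | ∀ i, 0 ≤ r i} p)
    (q r : Fin N → ℝ) (hq : ∀ i, 0 ≤ q i) (hr : ∀ i, 0 ≤ r i) :
    IsUniqMinOn
      (fun Q : (Fin N → ℝ) × (Fin N → ℝ) =>
        ((KLvec Q.1 p₁ + τ * KLvec Q.2 p₂ : ℝ) : EReal) +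
          ((if Q.1 = Q.2 then (0 : EReal) else ⊤) + h Q.1))
      {Q : (Fin N → ℝ) × (Fin N → ℝ) | (∀ i, 0 ≤ Q.1 i) ∧ ∀ i, 0 ≤ Q.2 i}
      (p, p) ∧
    IsUniqMinOn
      (fun Q : (Fin N → ℝ) × (Fin N → ℝ) =>
        ((KLvec Q.1 p₁ + τ * KLvec Q.2 p₂ : ℝ) : EReal) +
          (if Q = (q, r) then (0 : EReal) else ⊤))
      {Q : (Fin N → ℝ) × (Fin N → ℝ) | (∀ i, 0 ≤ Q.1 i) ∧ ∀ i, 0 ≤ Q.2 i}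
      (q, r) := by
  have hbot := hh.1
  obtain ⟨C, hC⟩ := KLvec_combo τ hτ p₁ p₂ hp₁ hp₂
  have key := fun x y : Fin N → ℝ =>
    obj_le_iff τ hτ _ _ _ _ C (hC x) (hC y) (h x) (h y) (hbot x) (hbot y)
  obtain ⟨hp, hmin, huniq⟩ := hrhs
  have hc : (0 : ℝ) < 1 / (1 + τ) := by positivity
  have hfin : h p ≠ ⊤ := by
    intro htop
    have := huniq (fun i => p i + 1) (fun i => by have := hp i; positivity) (by
      intro z hz
      have h1 := hmin z hz
      have h2 := hmin (fun i => p i + 1) (fun i => by have := hp i; positivity)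
      simp only [htop, EReal.coe_mul_top_of_pos hc, EReal.coe_add_top, top_le_iff] at h1
      simp only [h1, le_top])
    have := congrFun this ⟨0, hN⟩
    simp at this
  have htop : ∀ x y : Fin N → ℝ, ∀ A : ℝ, x ≠ y →
      (A : EReal) + ((if x = y then (0 : EReal) else ⊤) + h x) = ⊤ := by
    intro x y A hxy
    rw [if_neg hxy, EReal.top_add_of_ne_bot (hbot x), EReal.coe_add_top]
  refine ⟨⟨⟨hp, hp⟩, ?_, ?_⟩, ⟨⟨hq, hr⟩, ?_, ?_⟩⟩
  · rintro ⟨x, y⟩ ⟨hx, hy⟩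
    by_cases hxy : x = y
    · subst hxy
      simpa only [if_true] using (key p x).2 (hmin x hx)
    · simp only [htop x y _ hxy, le_top]
  · rintro ⟨x, y⟩ ⟨hx, hy⟩ hm
    by_cases hxy : x = y
    · subst hxy
      have : x = p := huniq x hx (by
        intro z hz
        have := hm (z, z) ⟨hz, hz⟩
        simp only [if_true] at this
        exact (key x z).1 this)
      rw [this]
    · exfalso
      have := hm (p, p) ⟨hp, hp⟩
      simp only [htop x y _ hxy, if_true, zero_add, top_le_iff] at this
      lift h p to ℝ using ⟨hfin, hbot p⟩ with w
      rw [← EReal.coe_add] at this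
      exact EReal.coe_ne_top _ this
  · intro Q _
    by_cases hQ : Q = (q, r)
    · rw [hQ]
    · simp only [if_neg hQ, EReal.coe_add_top, le_top]
  · intro Q _ hm
    by_contra hQ
    have := hm (q, r) ⟨hq, hr⟩
    simp only [if_neg hQ, EReal.coe_add_top, if_true, add_zero, top_le_iff] at this
    exact EReal.coe_ne_top _ this
end
end

section
/- Let N ≥ 1, τ, γ > 0, let h : ℝ^N → ℝ ∪ {+∞} be proper, lower semicontinuous and convex, let w_1, w_2 ∈ ℝ^N, set λ = (1,1), and define ψ_1(a_1, a_2) = (τ/γ)( h(a_1 + a_2) + ⟨w_1, a_1⟩ + ⟨w_2, a_2⟩ ). Then for all strictly positive a_1, a_2 ∈ ℝ^N, setting ã_i = a_i ⊙ e^{−(τ/γ) w_i} (entrywise) and r = Prox^{KL}_{(τ/γ) h}(ã_1 + ã_2) (assumed to exist uniquely), one has Prox^{KL_λ}_{ψ_1}(a_1, a_2) = ( (r ⊘ (ã_1 + ã_2)) ⊙ ã_1, (r ⊘ (ã_1 + ã_2)) ⊙ ã_2 ). -/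
open scoped BigOperators

noncomputable section

lemma kaux (x q : ℝ) (hx : 0 ≤ x) (hq : 0 < q) :
    0 ≤ x * Real.log (x / q) - x + q ∧ (x * Real.log (x / q) - x + q = 0 → x = q) := by
  rcases hx.eq_or_lt with rfl | hx
  · simp only [zero_mul, sub_zero, zero_add]
    exact ⟨hq.le, fun e => e.symm⟩
  · have hz : 0 < q / x := div_pos hq hx
    have e1 : Real.log (x / q) = - Real.log (q / x) := by
      rw [← Real.log_inv, inv_div]
    have e2 : x * (q / x) = q := by field_simp
    constructor
    · have := mul_le_mul_of_nonneg_left (Real.log_le_sub_one_of_pos hz) hx.le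
      rw [e1]; nlinarith
    · intro e0
      by_contra hne
      have hne' : q / x ≠ 1 := fun e => hne (by
        rw [div_eq_one_iff_eq hx.ne'] at e; exact e.symm)
      have := mul_lt_mul_of_pos_left (Real.log_lt_sub_one_of_pos hz hne') hx
      rw [e1] at e0; nlinarith

def dfun (x y α β : ℝ) : ℝ :=
  x * Real.log (x / α) + y * Real.log (y / β) - (x + y) * Real.log ((x + y) / (α + β))

lemma laux (x u α : ℝ) (hx : 0 ≤ x) (hu : 0 < u) (hα : 0 < α) :
    x * Real.log (x / (u * α)) = x * Real.log (x / α) - x * Real.log u := by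
  rcases hx.eq_or_lt with rfl | hx
  · simp
  · rw [Real.log_div hx.ne' (by positivity), Real.log_mul hu.ne' hα.ne',
      Real.log_div hx.ne' hα.ne']
    ring

lemma dfun_aux (x y α β : ℝ) (hx : 0 ≤ x) (hy : 0 ≤ y) (hα : 0 < α) (hβ : 0 < β) :
    0 ≤ dfun x y α β ∧ (dfun x y α β = 0 →
      x = (x + y) / (α + β) * α ∧ y = (x + y) / (α + β) * β) := by
  rcases (add_nonneg hx hy).eq_or_lt with h0 | h0
  · obtain rfl : x = 0 := by linarith
    obtain rfl : y = 0 := by linarith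
    simp [dfun]
  · have hu : 0 < (x + y) / (α + β) := by positivity
    have key : (x + y) / (α + β) * α + (x + y) / (α + β) * β = x + y := by field_simp
    unfold dfun
    set u := (x + y) / (α + β)
    have k1 := kaux x (u * α) hx (by positivity)
    have k2 := kaux y (u * β) hy (by positivity)
    rw [laux x u α hx hu hα] at k1
    rw [laux y u β hy hu hβ] at k2
    refine ⟨by linarith [k1.1, k2.1], fun e => ⟨k1.2 ?_, k2.2 ?_⟩⟩ <;> linarith [k1.1, k2.1]

lemma dfun_zero (r α β : ℝ) (hr : 0 ≤ r) (hα : 0 < α) (hβ : 0 < β) :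
    dfun (r / (α + β) * α) (r / (α + β) * β) α β = 0 := by
  have key : r / (α + β) * α + r / (α + β) * β = r := by field_simp
  unfold dfun
  rw [key, mul_div_cancel_right₀ _ hα.ne', mul_div_cancel_right₀ _ hβ.ne']
  linear_combination (Real.log (r / (α + β))) * key

lemma tilt (x a t w : ℝ) (hx : 0 ≤ x) (ha : 0 < a) :
    x * Real.log (x / (a * Real.exp (-t * w))) = x * Real.log (x / a) + t * (w * x) := by
  rw [mul_comm a, laux x _ a hx (Real.exp_pos _) ha, Real.log_exp]
  ring

lemma ereal_aux (A B K E t : ℝ) (ht : 0 < t) (h : EReal) (hb : h ≠ ⊥) (e : A + t * B = K + E) :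
    (A : EReal) + (t : EReal) * (h + (B : EReal)) =
      ((K : EReal) + (t : EReal) * h) + (E : EReal) := by
  induction h with
  | bot => exact absurd rfl hb
  | top => simp [EReal.coe_mul_top_of_pos ht]
  | coe h =>
    norm_cast
    linarith

/-- For `λ = (1,1)` and
`ψ₁(a₁,a₂) = (τ/γ)(h(a₁+a₂) + ⟨w₁,a₁⟩ + ⟨w₂,a₂⟩)`, setting `ã_i = a_i ⊙ e^{-(τ/γ)w_i}`
and `r = Prox^{KL}_{(τ/γ)h}(ã₁+ã₂)`, one has
`Prox^{KL_λ}_{ψ₁}(a₁,a₂) = ((r ⊘ (ã₁+ã₂)) ⊙ ã₁, (r ⊘ (ã₁+ã₂)) ⊙ ã₂)`. -/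
theorem KL_prox_summation_coupling {N : ℕ} (hN : 1 ≤ N)
    (τ γ : ℝ) (hτ : 0 < τ) (hγ : 0 < γ)
    (h : (Fin N → ℝ) → EReal) (hh : ProperLSCConvex h)
    (w₁ w₂ : Fin N → ℝ)
    (a₁ a₂ : Fin N → ℝ) (ha₁ : ∀ i, 0 < a₁ i) (ha₂ : ∀ i, 0 < a₂ i)
    (atil₁ atil₂ : Fin N → ℝ)
    (hatil₁ : atil₁ = fun i => a₁ i * Real.exp (-(τ / γ) * w₁ i))
    (hatil₂ : atil₂ = fun i => a₂ i * Real.exp (-(τ / γ) * w₂ i))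
    (r : Fin N → ℝ)
    (hr : IsUniqMinOn
      (fun x => ((KLvec x (fun i => atil₁ i + atil₂ i) : ℝ) : EReal) +
        ((τ / γ : ℝ) : EReal) * h x)
      {x : Fin N → ℝ | ∀ i, 0 ≤ x i} r) :
    IsUniqMinOn
      (fun Q : (Fin N → ℝ) × (Fin N → ℝ) =>
        ((KLvec Q.1 a₁ + KLvec Q.2 a₂ : ℝ) : EReal) +
          ((τ / γ : ℝ) : EReal) *
            (h (fun i => Q.1 i + Q.2 i) +
              ((∑ i, w₁ i * Q.1 i + ∑ i, w₂ i * Q.2 i : ℝ) : EReal)))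
      {Q : (Fin N → ℝ) × (Fin N → ℝ) | (∀ i, 0 ≤ Q.1 i) ∧ ∀ i, 0 ≤ Q.2 i}
      (fun i => r i / (atil₁ i + atil₂ i) * atil₁ i,
       fun i => r i / (atil₁ i + atil₂ i) * atil₂ i) := by
  have ht : 0 < τ / γ := div_pos hτ hγ
  set t := τ / γ
  have p₁ : ∀ i, 0 < atil₁ i := fun i => by
    rw [hatil₁]; exact mul_pos (ha₁ i) (Real.exp_pos _)
  have p₂ : ∀ i, 0 < atil₂ i := fun i => by
    rw [hatil₂]; exact mul_pos (ha₂ i) (Real.exp_pos _)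
  obtain ⟨hrS, hrmin, hruniq⟩ := hr
  simp only [Set.mem_setOf_eq] at hrS hrmin hruniq
  set G : (Fin N → ℝ) → EReal := fun x =>
    ((KLvec x (fun i => atil₁ i + atil₂ i) : ℝ) : EReal) + (t : EReal) * h x with hG
  change ∀ y : Fin N → ℝ, (∀ i, 0 ≤ y i) → G r ≤ G y at hrmin
  change ∀ y : Fin N → ℝ, (∀ i, 0 ≤ y i) →
    (∀ z : Fin N → ℝ, (∀ i, 0 ≤ z i) → G y ≤ G z) → y = r at hruniq
  have hGtop : G r ≠ ⊤ := by
    intro e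
    have hall : ∀ y : Fin N → ℝ, (∀ i, 0 ≤ y i) → y = r := fun y hy =>
      hruniq y hy fun z hz => by
        have := hrmin z hz
        rw [e, top_le_iff] at this
        rw [this]; exact le_top
    have e0 := hall (fun _ => 0) (fun _ => le_rfl)
    have e1 := hall (fun _ => 1) (fun _ => zero_le_one)
    have := congrFun (e0.trans e1.symm) ⟨0, hN⟩
    norm_num at this
  have hGbot : G r ≠ ⊥ := by
    have hb := hh.1 r
    simp only [hG]
    generalize h r = v at hb
    induction v with
    | bot => exact absurd rfl hb
    | top => simp [EReal.coe_mul_top_of_pos ht]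
    | coe v => rw [← EReal.coe_mul, ← EReal.coe_add]; exact EReal.coe_ne_bot _
  set c : ℝ := ∑ i, (a₁ i + a₂ i - atil₁ i - atil₂ i) with hc
  set D : (Fin N → ℝ) × (Fin N → ℝ) → ℝ := fun Q =>
    ∑ i, dfun (Q.1 i) (Q.2 i) (atil₁ i) (atil₂ i) with hD
  set F : (Fin N → ℝ) × (Fin N → ℝ) → EReal := fun Q =>
        ((KLvec Q.1 a₁ + KLvec Q.2 a₂ : ℝ) : EReal) +
          (t : EReal) *
            (h (fun i => Q.1 i + Q.2 i) +
              ((∑ i, w₁ i * Q.1 i + ∑ i, w₂ i * Q.2 i : ℝ) : EReal)) with hF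
  have hFG : ∀ Q : (Fin N → ℝ) × (Fin N → ℝ), (∀ i, 0 ≤ Q.1 i) → (∀ i, 0 ≤ Q.2 i) →
      F Q = G (fun i => Q.1 i + Q.2 i) + ((D Q + c : ℝ) : EReal) := by
    intro Q h1 h2
    refine ereal_aux _ _ _ _ t ht _ (hh.1 _) ?_
    simp only [KLvec, hD, hc, ← Finset.sum_add_distrib, Finset.mul_sum]
    refine Finset.sum_congr rfl fun i _ => ?_
    have t1 := tilt (Q.1 i) (a₁ i) t (w₁ i) (h1 i) (ha₁ i)
    have t2 := tilt (Q.2 i) (a₂ i) t (w₂ i) (h2 i) (ha₂ i)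
    have q1 : a₁ i * Real.exp (-t * w₁ i) = atil₁ i := by rw [hatil₁]
    have q2 : a₂ i * Real.exp (-t * w₂ i) = atil₂ i := by rw [hatil₂]
    rw [q1] at t1
    rw [q2] at t2
    unfold dfun
    linear_combination -t1 - t2
  have hDnn : ∀ Q : (Fin N → ℝ) × (Fin N → ℝ), (∀ i, 0 ≤ Q.1 i) → (∀ i, 0 ≤ Q.2 i) →
      0 ≤ D Q := fun Q h1 h2 =>
    Finset.sum_nonneg fun i _ => (dfun_aux _ _ _ _ (h1 i) (h2 i) (p₁ i) (p₂ i)).1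
  set R : (Fin N → ℝ) × (Fin N → ℝ) := (fun i => r i / (atil₁ i + atil₂ i) * atil₁ i,
       fun i => r i / (atil₁ i + atil₂ i) * atil₂ i) with hR
  have hR1 : ∀ i, 0 ≤ R.1 i := fun i =>
    mul_nonneg (div_nonneg (hrS i) (add_pos (p₁ i) (p₂ i)).le) (p₁ i).le
  have hR2 : ∀ i, 0 ≤ R.2 i := fun i =>
    mul_nonneg (div_nonneg (hrS i) (add_pos (p₁ i) (p₂ i)).le) (p₂ i).le
  have hRs : (fun i => R.1 i + R.2 i) = r := by
    funext i
    have := (add_pos (p₁ i) (p₂ i)).ne'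
    simp only [hR]
    field_simp
  have hDR : D R = 0 := Finset.sum_eq_zero fun i _ => dfun_zero _ _ _ (hrS i) (p₁ i) (p₂ i)
  have hFR : F R = G r + (c : EReal) := by
    rw [hFG R hR1 hR2, hRs, hDR, zero_add]
  lift G r to ℝ using ⟨hGtop, hGbot⟩ with g hg
  refine ⟨⟨hR1, hR2⟩, ?_, ?_⟩
  · rintro Q ⟨h1, h2⟩
    rw [hFR, hFG Q h1 h2]
    refine add_le_add (hrmin _ fun i => add_nonneg (h1 i) (h2 i)) ?_
    exact_mod_cast (by linarith [hDnn Q h1 h2])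
  · rintro Q ⟨h1, h2⟩ hQ
    have hle := hQ R ⟨hR1, hR2⟩
    have hs : ∀ i, 0 ≤ Q.1 i + Q.2 i := fun i => add_nonneg (h1 i) (h2 i)
    have hm := hrmin _ hs
    have hd := hDnn Q h1 h2
    rw [hFR, hFG Q h1 h2] at hle
    have hfin : G (fun i => Q.1 i + Q.2 i) = (g : EReal) ∧ D Q = 0 := by
      generalize G (fun i => Q.1 i + Q.2 i) = v at hle hm
      induction v with
      | bot => simp at hm
      | top => 
        rw [EReal.top_add_coe, ← EReal.coe_add] at hle
        exact absurd (top_le_iff.1 hle) (EReal.coe_ne_top _)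
      | coe v =>
        norm_cast at hle hm ⊢
        constructor <;> linarith
    have hsr := hruniq _ hs fun z hz => by rw [hfin.1]; exact hrmin z hz
    have hz := (Finset.sum_eq_zero_iff_of_nonneg (fun i _ =>
      (dfun_aux _ _ _ _ (h1 i) (h2 i) (p₁ i) (p₂ i)).1)).1 hfin.2
    have hq := fun i => (dfun_aux _ _ _ _ (h1 i) (h2 i) (p₁ i) (p₂ i)).2 (hz i (Finset.mem_univ i))
    have hsi : ∀ i, Q.1 i + Q.2 i = r i := fun i => congrFun hsr i
    refine Prod.ext ?_ ?_
    · funext i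
      have := (hq i).1
      rw [hsi i] at this
      exact this
    · funext i
      have := (hq i).2
      rw [hsi i] at this
      exact this
end
end
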